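/- Let Γ'' be a composite of closed Galois structures Γ : (𝒞, ℰ) → (𝒳, ℱ) and Γ' : (𝒳, ℱ) → (𝒴, 𝒢), with 𝒞 pointed protomodular, (𝒞, ℰ) satisfying (E4), (E5), (M), I preserving pullbacks of type (1) and the second reflector protoadditive. Let 0 → ι(A) → P →^f Q → 0 be a short exact sequence in Ext_ℰ(𝒞), where A is an object of 𝒞, ι(A) denotes the extension A → 0, f is a double ℰ-extension (f ∈ ℰ¹), P is an ℰ-extension and Q is a Γ-normal extension. Then: (i) applying the kernel functor yields a short exact sequence 0 → A → Ker(P) → Ker(Q) → 0 in 𝒞, with Ker(f) ∈ ℰ and Ker(Q) ∈ 𝒳; (ii) the closure of ι(A) in P with respect to the subcategory NExt_{Γ''}(𝒞) equals ι applied to the closure of A in Ker(P) with respect to 𝒴, i.e. cl^{NExt_{Γ''}(𝒞)}_P(ι(A)) = ι( cl^𝒴_{Ker(P)}(A) ). -/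

import Mathlib

open CategoryTheory Limits

universe v u

section Axioms
variable {𝒟 : Type u} [Category.{v} 𝒟]

/-- Axiom (E1): the class contains all isomorphisms. -/
def AxE1 (E : MorphismProperty 𝒟) : Prop := ∀ {X Y : 𝒟} (f : X ⟶ Y), IsIso f → E f

/-- Axiom (E2): pullbacks of morphisms of the class exist and belong to the class. -/
def AxE2 (E : MorphismProperty 𝒟) : Prop :=
  ∀ {X Y Z : 𝒟} (f : X ⟶ Z) (g : Y ⟶ Z), E g →
    ∃ (P : 𝒟) (p₁ : P ⟶ X) (p₂ : P ⟶ Y), IsPullback p₁ p₂ f g ∧ E p₁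

/-- Axiom (E3): the class is closed under composition. -/
def AxE3 (E : MorphismProperty 𝒟) : Prop :=
  ∀ {X Y Z : 𝒟} (f : X ⟶ Y) (g : Y ⟶ Z), E f → E g → E (f ≫ g)

/-- Axiom (E4): if `f ≫ g` is in the class then so is `g`. -/
def AxE4 (E : MorphismProperty 𝒟) : Prop :=
  ∀ {X Y Z : 𝒟} (f : X ⟶ Y) (g : Y ⟶ Z), E (f ≫ g) → E g

/-- Axiom (E5): in a morphism of short exact sequences over a fixed base `A₀`, if the
extension `a` and the induced morphism `k` on kernels lie in the class, then so does the
middle morphism `f`. -/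
def AxE5 [HasZeroMorphisms 𝒟] (E : MorphismProperty 𝒟) : Prop :=
  ∀ {K L A₁ B A₀ : 𝒟} (ka : K ⟶ A₁) (kb : L ⟶ B) (a : A₁ ⟶ A₀) (b : B ⟶ A₀)
    (f : A₁ ⟶ B) (k : K ⟶ L), f ≫ b = a → k ≫ kb = ka ≫ f →
    ∀ (ha : ka ≫ a = 0) (hb : kb ≫ b = 0),
    Nonempty (IsLimit (KernelFork.ofι ka ha)) →
    Nonempty (IsLimit (KernelFork.ofι kb hb)) →
    E a → E k → E f

/-- The split short five lemma in a pointed category. -/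
def SplitShortFive (𝒟 : Type u) [Category.{v} 𝒟] [HasZeroMorphisms 𝒟] : Prop :=
  ∀ {K A B K' A' B' : 𝒟} (k : K ⟶ A) (f : A ⟶ B) (s : B ⟶ A)
    (k' : K' ⟶ A') (f' : A' ⟶ B') (s' : B' ⟶ A')
    (u : K ⟶ K') (v : A ⟶ A') (w : B ⟶ B'),
    s ≫ f = 𝟙 B → s' ≫ f' = 𝟙 B' →
    ∀ (hk : k ≫ f = 0) (hk' : k' ≫ f' = 0),
    Nonempty (IsLimit (KernelFork.ofι k hk)) →
    Nonempty (IsLimit (KernelFork.ofι k' hk')) →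
    u ≫ k' = k ≫ v → v ≫ f' = f ≫ w →
    IsIso u → IsIso w → IsIso v

/-- Pullbacks along split epimorphisms exist. -/
def HasSplitEpiPullbacks (𝒟 : Type u) [Category.{v} 𝒟] : Prop :=
  ∀ {X Y Z : 𝒟} (g : X ⟶ Z) (s : Z ⟶ X), s ≫ g = 𝟙 Z → ∀ h : Y ⟶ Z,
    ∃ (P : 𝒟) (p₁ : P ⟶ X) (p₂ : P ⟶ Y), IsPullback p₁ p₂ g h

/-- A pointed category is protomodular when it has pullbacks along split epimorphisms
and the split short five lemma holds. -/
def ProtomodularCat (𝒟 : Type u) [Category.{v} 𝒟] [HasZeroMorphisms 𝒟] : Prop :=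
  HasSplitEpiPullbacks 𝒟 ∧ SplitShortFive 𝒟

/-- An object of the `E`-slice category `(𝒟 ↓_E B)`: a morphism of `E` with codomain `B`. -/
structure ESliceObj (E : MorphismProperty 𝒟) (B : 𝒟) where
  dom : 𝒟
  hom : dom ⟶ B
  mem : E hom

/-- Morphisms of the `E`-slice category. -/
@[ext] structure ESliceHom {E : MorphismProperty 𝒟} {B : 𝒟} (g h : ESliceObj E B) where
  top : g.dom ⟶ h.dom
  w : top ≫ h.hom = g.hom

instance {E : MorphismProperty 𝒟} {B : 𝒟} : Category (ESliceObj E B) where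
  Hom := ESliceHom
  id g := ⟨𝟙 g.dom, Category.id_comp _⟩
  comp φ ψ := ⟨φ.top ≫ ψ.top, by rw [Category.assoc, ψ.w, φ.w]⟩
  id_comp φ := ESliceHom.ext (Category.id_comp φ.top)
  comp_id φ := ESliceHom.ext (Category.comp_id φ.top)
  assoc φ ψ χ := ESliceHom.ext (Category.assoc φ.top ψ.top χ.top)

/-- A functor `(𝒟 ↓_E B) ⥤ (𝒟 ↓_E A)` realizing base change (pullback) along
`f : A ⟶ B`. -/
structure PullbackFunctorAlong (E : MorphismProperty 𝒟) {A B : 𝒟} (f : A ⟶ B) where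
  R : ESliceObj E B ⥤ ESliceObj E A
  top : ∀ g : ESliceObj E B, (R.obj g).dom ⟶ g.dom
  isPB : ∀ g : ESliceObj E B, IsPullback (top g) (R.obj g).hom g.hom f
  nat : ∀ {g h : ESliceObj E B} (φ : g ⟶ h), (R.map φ).top ≫ top h = top g ≫ φ.top

/-- Axiom (M): every morphism of the class is monadic, i.e. any base-change functor
`f* : (𝒟 ↓_E B) ⥤ (𝒟 ↓_E A)` along a morphism `f` of `E` is a monadic right adjoint. -/
def AxM (E : MorphismProperty 𝒟) : Prop :=
  ∀ {A B : 𝒟} (f : A ⟶ B), E f →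
    ∀ P : PullbackFunctorAlong E f, Nonempty (MonadicRightAdjoint P.R)

/-- An object of the category `Ext_E(𝒟)` of `E`-extensions: a morphism of class `E`. -/
structure ExtObj (E : MorphismProperty 𝒟) where
  dom : 𝒟
  cod : 𝒟
  hom : dom ⟶ cod
  mem : E hom

/-- Morphisms of `Ext_E(𝒟)`: commutative squares. -/
@[ext] structure ExtHom {E : MorphismProperty 𝒟} (a b : ExtObj E) where
  top : a.dom ⟶ b.dom
  bot : a.cod ⟶ b.cod
  w : top ≫ b.hom = a.hom ≫ bot

instance {E : MorphismProperty 𝒟} : Category (ExtObj E) where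
  Hom := ExtHom
  id a := ⟨𝟙 a.dom, 𝟙 a.cod, by simp⟩
  comp φ ψ := ⟨φ.top ≫ ψ.top, φ.bot ≫ ψ.bot, by
    rw [Category.assoc, ψ.w, ← Category.assoc, φ.w, Category.assoc]⟩
  id_comp φ := ExtHom.ext (Category.id_comp φ.top) (Category.id_comp φ.bot)
  comp_id φ := ExtHom.ext (Category.comp_id φ.top) (Category.comp_id φ.bot)
  assoc φ ψ χ := ExtHom.ext (Category.assoc φ.top ψ.top χ.top)
    (Category.assoc φ.bot ψ.bot χ.bot)

instance {E : MorphismProperty 𝒟} [HasZeroMorphisms 𝒟] :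
    HasZeroMorphisms (ExtObj E) where
  zero a b := ⟨⟨0, 0, by simp⟩⟩
  comp_zero φ c := ExtHom.ext (comp_zero) (comp_zero)
  zero_comp a {b c} φ := ExtHom.ext (zero_comp) (zero_comp)

@[simp] lemma ExtHom.comp_top {E : MorphismProperty 𝒟} {a b c : ExtObj E}
    (φ : a ⟶ b) (ψ : b ⟶ c) : (φ ≫ ψ).top = φ.top ≫ ψ.top := rfl

@[simp] lemma ExtHom.comp_bot {E : MorphismProperty 𝒟} {a b c : ExtObj E}
    (φ : a ⟶ b) (ψ : b ⟶ c) : (φ ≫ ψ).bot = φ.bot ≫ ψ.bot := rfl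

@[simp] lemma ExtHom.id_top {E : MorphismProperty 𝒟} (a : ExtObj E) :
    (𝟙 a : a ⟶ a).top = 𝟙 a.dom := rfl

@[simp] lemma ExtHom.id_bot {E : MorphismProperty 𝒟} (a : ExtObj E) :
    (𝟙 a : a ⟶ a).bot = 𝟙 a.cod := rfl

/-- A morphism of `Ext_E(𝒟)` is a double `E`-extension when its two components are in `E`
and the comparison morphism to (any) pullback is in `E`. -/
def IsDoubleExt {E : MorphismProperty 𝒟} {a b : ExtObj E} (φ : a ⟶ b) : Prop :=
  E φ.top ∧ E φ.bot ∧
  ∀ {P : 𝒟} (p₁ : P ⟶ a.cod) (p₂ : P ⟶ b.dom), IsPullback p₁ p₂ φ.bot b.hom →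
    ∀ (l : a.dom ⟶ P), l ≫ p₁ = a.hom → l ≫ p₂ = φ.top → E l

/-- The class of double `E`-extensions, as a morphism property of `Ext_E(𝒟)`. -/
def DoubleExtClass (E : MorphismProperty 𝒟) : MorphismProperty (ExtObj E) :=
  fun _ _ φ => IsDoubleExt φ


/-- A functor preserves pullbacks of type (1): pullbacks of a split epimorphism `g ∈ ℰ`
along a morphism `h ∈ ℰ`. -/
def PreservesType1 (E : MorphismProperty 𝒟) (T : 𝒟 ⥤ 𝒟) : Prop :=
  ∀ {A B D C : 𝒟} (k : A ⟶ B) (l : A ⟶ D) (g : B ⟶ C) (h : D ⟶ C) (s : C ⟶ B),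
    s ≫ g = 𝟙 C → E g → E h → IsPullback k l g h →
    IsPullback (T.map k) (T.map l) (T.map g) (T.map h)

/-- A functor between pointed categories is protoadditive when it preserves split short
exact sequences (equivalently: zero morphisms and kernels of split epimorphisms). -/
structure Protoadditive {𝒟' : Type*} [Category 𝒟'] [HasZeroMorphisms 𝒟]
    [HasZeroMorphisms 𝒟'] (T : 𝒟 ⥤ 𝒟') : Prop where
  map_zero : ∀ (X Y : 𝒟), T.map (0 : X ⟶ Y) = 0
  preserves : ∀ {K A B : 𝒟} (k : K ⟶ A) (f : A ⟶ B) (s : B ⟶ A),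
    s ≫ f = 𝟙 B → ∀ (hk : k ≫ f = 0),
    Nonempty (IsLimit (KernelFork.ofι k hk)) →
    Nonempty (IsLimit (KernelFork.ofι (T.map k)
      (show T.map k ≫ T.map f = 0 by rw [← T.map_comp, hk, map_zero])))

end Axioms

/-- A closed Galois structure `Γ = (𝒞, 𝒳, I, H, η, ε, ℰ, ℱ)`: the replete full reflective
subcategory `𝒳` of `𝒞` is given by the predicate `inX`, the reflector `I` (composed with
the inclusion `H`) with unit `η` and the reflection universal property; the classes of
extensions `ℰ` (in `𝒞`) and `ℱ` (in `𝒳`) satisfy (E1)–(E3), `I(ℰ) ⊆ ℱ`, `H(ℱ) ⊆ ℰ`,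
unit components lie in `ℰ`, and the counit is an isomorphism. -/
structure GaloisStructure (𝒞 : Type u) [Category.{v} 𝒞] where
  inX : 𝒞 → Prop
  inX_iso : ∀ {X Y : 𝒞}, (X ≅ Y) → inX X → inX Y
  I : 𝒞 ⥤ 𝒞
  η : 𝟭 𝒞 ⟶ I
  I_mem : ∀ C : 𝒞, inX (I.obj C)
  refl_univ : ∀ {C D : 𝒞}, inX D → ∀ f : C ⟶ D, ∃! g : I.obj C ⟶ D, η.app C ≫ g = f
  η_iso_of_mem : ∀ {C : 𝒞}, inX C → IsIso (η.app C)
  E : MorphismProperty 𝒞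
  F : MorphismProperty 𝒞
  F_sub_E : ∀ {X Y : 𝒞} (f : X ⟶ Y), F f → E f
  F_in_X : ∀ {X Y : 𝒞} (f : X ⟶ Y), F f → inX X ∧ inX Y
  E1 : AxE1 E
  E2 : AxE2 E
  E3 : AxE3 E
  F1 : ∀ {X Y : 𝒞} (f : X ⟶ Y), inX X → inX Y → IsIso f → F f
  F2 : ∀ {X Y Z : 𝒞} (f : X ⟶ Z) (g : Y ⟶ Z), inX X → F g →
    ∃ (P : 𝒞) (p₁ : P ⟶ X) (p₂ : P ⟶ Y), IsPullback p₁ p₂ f g ∧ F p₁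
  F3 : ∀ {X Y Z : 𝒞} (f : X ⟶ Y) (g : Y ⟶ Z), F f → F g → F (f ≫ g)
  I_map_mem : ∀ {X Y : 𝒞} (f : X ⟶ Y), E f → F (I.map f)
  η_mem : ∀ C : 𝒞, E (η.app C)

namespace GaloisStructure

variable {𝒞 : Type u} [Category.{v} 𝒞] (G : GaloisStructure 𝒞)

/-- An extension is `Γ`-trivial when the naturality square of the unit at it is a
pullback. -/
def Trivial {A B : 𝒞} (f : A ⟶ B) : Prop :=
  IsPullback (G.η.app A) f (G.I.map f) (G.η.app B)

/-- An extension is `Γ`-normal when it lies in `ℰ` and the first projection of its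
kernel pair is `Γ`-trivial (in the presence of axiom (M) every morphism of `ℰ` is
monadic, so this agrees with the usual definition of normal extension). -/
def Normal {A B : 𝒞} (f : A ⟶ B) : Prop :=
  G.E f ∧ ∀ {P : 𝒞} (p₁ p₂ : P ⟶ A), IsPullback p₁ p₂ f f → G.Trivial p₁

end GaloisStructure

/-- Protoadditivity of a functor restricted to the full subcategory determined by a
predicate: split short exact sequences whose objects satisfy the predicate are sent to
split short exact sequences. -/
structure ProtoadditiveOn {𝒞 : Type u} [Category.{v} 𝒞] [HasZeroMorphisms 𝒞]
    (P : 𝒞 → Prop) (T : 𝒞 ⥤ 𝒞) : Prop where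
  map_zero : ∀ (X Y : 𝒞), P X → P Y → T.map (0 : X ⟶ Y) = 0
  preserves : ∀ {K A B : 𝒞} (k : K ⟶ A) (f : A ⟶ B) (s : B ⟶ A),
    P K → P A → P B → s ≫ f = 𝟙 B → ∀ (hk : k ≫ f = 0),
    Nonempty (IsLimit (KernelFork.ofι k hk)) →
    ∃ h0 : T.map k ≫ T.map f = 0,
      Nonempty (IsLimit (KernelFork.ofι (T.map k) h0))

/-- The data of a second closed Galois structure `Γ' = (F, U, θ, ζ) : (𝒳, ℱ) → (𝒴, 𝒢)`
on the reflective subcategory `𝒳` of a Galois structure `Γ` on `𝒞`: the replete full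
reflective subcategory `𝒴 ⊆ 𝒳` is given by `inY`, the reflector `F` (written `Fr`, with
unit `θ`) reflects `𝒳` onto `𝒴`, and the class `𝒢` of extensions of `𝒴` interacts with
`ℱ` as required for a closed Galois structure.  Composing with `Γ` yields the composite
Galois structure `Γ'' : (𝒞, ℰ) → (𝒴, 𝒢)` with reflector `F ∘ I` and unit
`θ_{I(−)} ∘ η`. -/
structure SecondStructure {𝒞 : Type u} [Category.{v} 𝒞] (G : GaloisStructure 𝒞) where
  inY : 𝒞 → Prop
  inY_iso : ∀ {X Y : 𝒞}, (X ≅ Y) → inY X → inY Y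
  Y_sub_X : ∀ C : 𝒞, inY C → G.inX C
  Fr : 𝒞 ⥤ 𝒞
  θ : 𝟭 𝒞 ⟶ Fr
  Fr_mem : ∀ C : 𝒞, G.inX C → inY (Fr.obj C)
  refl_univ : ∀ {C D : 𝒞}, G.inX C → inY D → ∀ f : C ⟶ D,
    ∃! g : Fr.obj C ⟶ D, θ.app C ≫ g = f
  θ_iso_of_mem : ∀ {C : 𝒞}, inY C → IsIso (θ.app C)
  𝒢 : MorphismProperty 𝒞
  𝒢_sub_F : ∀ {X Y : 𝒞} (f : X ⟶ Y), 𝒢 f → G.F f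
  𝒢_in_Y : ∀ {X Y : 𝒞} (f : X ⟶ Y), 𝒢 f → inY X ∧ inY Y
  θ_mem : ∀ C : 𝒞, G.inX C → G.F (θ.app C)
  Fr_map_mem : ∀ {X Y : 𝒞} (f : X ⟶ Y), G.F f → 𝒢 (Fr.map f)
  G1 : ∀ {X Y : 𝒞} (f : X ⟶ Y), inY X → inY Y → IsIso f → 𝒢 f
  G3 : ∀ {X Y Z : 𝒞} (f : X ⟶ Y) (g : Y ⟶ Z), 𝒢 f → 𝒢 g → 𝒢 (f ≫ g)

namespace SecondStructure

variable {𝒞 : Type u} [Category.{v} 𝒞] {G : GaloisStructure 𝒞} (S : SecondStructure G)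

/-- The unit `θ_{I(−)} ∘ η` of the composite reflection `F ∘ I` of `𝒞` onto `𝒴`. -/
def unit (C : 𝒞) : C ⟶ S.Fr.obj (G.I.obj C) := G.η.app C ≫ S.θ.app (G.I.obj C)

/-- `Γ''`-triviality: the naturality square of the unit of the composite reflection is
a pullback. -/
def TrivialComp {A B : 𝒞} (f : A ⟶ B) : Prop :=
  IsPullback (S.unit A) f ((G.I ⋙ S.Fr).map f) (S.unit B)

/-- `Γ''`-normality: the extension lies in `ℰ` and the first projection of its kernel
pair is `Γ''`-trivial. -/
def NormalComp {A B : 𝒞} (f : A ⟶ B) : Prop :=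
  G.E f ∧ ∀ {P : 𝒞} (p₁ p₂ : P ⟶ A), IsPullback p₁ p₂ f f → S.TrivialComp p₁

end SecondStructure

/-- A normalization: a reflection of the category `Ext_ℰ(𝒞)` onto its full subcategory of
extensions satisfying the predicate `N` (e.g. the `Γ`-normal, or `Γ''`-normal,
extensions): a left adjoint `I₁` of the inclusion, given by its unit `η₁` (whose codomain
components are isomorphisms) and the universal property. -/
structure Normalization {𝒞 : Type u} [Category.{v} 𝒞] (E : MorphismProperty 𝒞)
    (N : MorphismProperty 𝒞) where
  I₁ : ExtObj E ⥤ ExtObj E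
  η₁ : 𝟭 (ExtObj E) ⟶ I₁
  mem : ∀ a : ExtObj E, N (I₁.obj a).hom
  refl_univ : ∀ (a b : ExtObj E), N b.hom → ∀ φ : a ⟶ b,
    ∃! ψ : I₁.obj a ⟶ b, η₁.app a ≫ ψ = φ
  η_iso_of_mem : ∀ a : ExtObj E, N a.hom → IsIso (η₁.app a)
  bot_iso : ∀ a : ExtObj E, IsIso (ExtHom.bot (η₁.app a))

/-- The radical `[−]_{Γ',1}` associated with a normalization: the kernel of the domain
component of the unit, with its functorial action. -/
noncomputable def rad1map {𝒞 : Type u} [Category.{v} 𝒞] [HasZeroMorphisms 𝒞]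
    [HasKernels 𝒞] {E N : MorphismProperty 𝒞} (ND : Normalization E N)
    {a b : ExtObj E} (φ : a ⟶ b) :
    kernel ((ND.η₁.app a).top) ⟶ kernel ((ND.η₁.app b).top) :=
  kernel.map _ _ φ.top (ND.I₁.map φ).top (by
    have h := congrArg ExtHom.top (ND.η₁.naturality φ)
    simpa using h.symm)

section Closure

variable {𝒞 : Type u} [Category.{v} 𝒞] [HasZeroMorphisms 𝒞] [HasFiniteLimits 𝒞]

/-- The inclusion `[p]_{Γ,1} ⟶ Ker p` of the radical of an extension into its kernel
(`[p]_{Γ,1}` is the kernel of the domain component of the normalisation unit). -/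
noncomputable def radOneToKer {E N : MorphismProperty 𝒞} (ND : Normalization E N)
    (p : ExtObj E) : kernel ((ND.η₁.app p).top) ⟶ kernel p.hom :=
  kernel.lift p.hom (kernel.ι ((ND.η₁.app p).top)) (by
    haveI := ND.bot_iso p
    have hw : (ND.η₁.app p).top ≫ (ND.I₁.obj p).hom = p.hom ≫ (ND.η₁.app p).bot := by
      simpa using (ND.η₁.app p).w
    rw [← cancel_mono ((ND.η₁.app p).bot), Category.assoc, ← hw,
      ← Category.assoc, kernel.condition, zero_comp, zero_comp])

variable [HasCokernels 𝒞] {G : GaloisStructure 𝒞}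

/-- The closure operator associated with the composite reflection onto `𝒴`: for a
(normal mono)morphism `k : K ⟶ A`, its closure is the preimage under `coker k` of the
kernel of the unit of the composite reflection `F ∘ I` at `Coker k`, i.e.
`Ker( unit''_{Coker k} ∘ coker k )`. -/
noncomputable def clY (S : SecondStructure G) {K A : 𝒞} (k : K ⟶ A) : 𝒞 :=
  kernel (cokernel.π k ≫ S.unit (cokernel k))

/-- The inclusion of the closure into the ambient object. -/
noncomputable def clYι (S : SecondStructure G) {K A : 𝒞} (k : K ⟶ A) :
    clY S k ⟶ A :=
  kernel.ι (cokernel.π k ≫ S.unit (cokernel k))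

/-- The Galois group `Gal_{Γ''}(q, 0) = [Dom q]_{Γ'',0} ∩ Ker q` of an extension with
respect to the composite Galois structure `Γ''`. -/
noncomputable def galObjComp (S : SecondStructure G) (a : ExtObj G.E) : 𝒞 :=
  pullback (kernel.ι (S.unit a.dom)) (kernel.ι a.hom)

end Closure

/-
The quotient of the extension `Q` by the kernel of `θ` on `Ker Q` is `Γ''`-normal. To see this,
reflect the first kernel-pair projection `p₁` of `Q` instead: it is a split `Γ`-trivial extension
whose kernel is `Ker Q`, so by protoadditivity its `Γ''`-trivial reflection `τ` is its quotient by
that same kernel. The quotient map transports the descent datum of `p₁` to `τ`, and `τ` descends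
along the monadic morphism `Q` to a quotient of `Q`, which is normal because pullbacks of type (1)
are preserved. Hence `η¹''_Q` and the unit at `Ker Q` have the same kernel.

On the other hand, `f` is invertible on codomains, so `Ker f` is a pullback of an extension, hence
an extension, and it identifies `Coker ℓ` with `Ker Q`. Both closures are therefore the preimage
under `Ker f` of the same radical of `Ker Q`.
-/

section Kernels

variable {𝒞 : Type u} [Category.{v} 𝒞] [HasZeroMorphisms 𝒞]

lemma comp_eq_zero_iff_of_mono {X Y Z : 𝒞} (x : X ⟶ Y) (m : Y ⟶ Z) [Mono m] :
    x ≫ m = 0 ↔ x = 0 :=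
  ⟨zero_of_comp_mono m, fun h => by rw [h, zero_comp]⟩

/-- `k` is a kernel of `f`, as a proposition. -/
structure IsKernelOf {K A B : 𝒞} (k : K ⟶ A) (f : A ⟶ B) : Prop where
  w : k ≫ f = 0
  isLimit : Nonempty (IsLimit (KernelFork.ofι k w))

lemma isKernelOf_kernel_ι {A B : 𝒞} (f : A ⟶ B) [HasKernel f] : IsKernelOf (kernel.ι f) f :=
  ⟨kernel.condition f, ⟨kernelIsKernel f⟩⟩

namespace IsKernelOf

lemma mono {K A B : 𝒞} {k : K ⟶ A} {f : A ⟶ B} (h : IsKernelOf k f) : Mono k :=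
  Fork.IsLimit.mono h.isLimit.some

lemma exists_lift {K A B W : 𝒞} {k : K ⟶ A} {f : A ⟶ B} (h : IsKernelOf k f) (x : W ⟶ A)
    (hx : x ≫ f = 0) : ∃ y : W ⟶ K, y ≫ k = x :=
  ⟨_, (KernelFork.IsLimit.lift' h.isLimit.some x hx).2⟩

lemma of_exists_lift {K A B : 𝒞} {k : K ⟶ A} {f : A ⟶ B} [Mono k] (w : k ≫ f = 0)
    (lift : ∀ {W : 𝒞} (x : W ⟶ A), x ≫ f = 0 → ∃ y : W ⟶ K, y ≫ k = x) : IsKernelOf k f :=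
  ⟨w, ⟨KernelFork.IsLimit.ofι' k w fun x hx => ⟨_, (lift x hx).choose_spec⟩⟩⟩

lemma congr {K A B B' : 𝒞} {k : K ⟶ A} {f : A ⟶ B} {f' : A ⟶ B'} (h : IsKernelOf k f)
    (hf : ∀ {W : 𝒞} (x : W ⟶ A), x ≫ f = 0 ↔ x ≫ f' = 0) : IsKernelOf k f' :=
  ⟨(hf k).1 h.w, ⟨KernelFork.isLimitOfIsLimitOfIff' h.isLimit.some f' fun _ => hf⟩⟩

lemma comp_mono {K A B B' : 𝒞} {k : K ⟶ A} {f : A ⟶ B} (h : IsKernelOf k f) (m : B ⟶ B')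
    [Mono m] : IsKernelOf k (f ≫ m) :=
  h.congr fun x => by rw [← Category.assoc, comp_eq_zero_iff_of_mono (x ≫ f)]

lemma exists_iso {K K' A B : 𝒞} {k : K ⟶ A} {k' : K' ⟶ A} {f : A ⟶ B} (h : IsKernelOf k f)
    (h' : IsKernelOf k' f) : ∃ e : K ≅ K', e.hom ≫ k' = k :=
  ⟨h.isLimit.some.conePointUniqueUpToIso h'.isLimit.some,
    h.isLimit.some.conePointUniqueUpToIso_hom_comp h'.isLimit.some WalkingParallelPair.zero⟩

lemma exists_lift_of_isPullback {K P X Y Z : 𝒞} {a : P ⟶ X} {b : P ⟶ Y} {c : X ⟶ Z} {d : Y ⟶ Z}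
    {k : K ⟶ X} (h : IsPullback a b c d) (hk : IsKernelOf k c) :
    ∃ k' : K ⟶ P, k' ≫ a = k ∧ IsKernelOf k' b := by
  have w : k ≫ c = (0 : K ⟶ Y) ≫ d := by rw [hk.w, zero_comp]
  have hfac : h.lift k 0 w ≫ a = k := h.lift_fst _ _ _
  have := hk.mono
  have : Mono (h.lift k 0 w) := mono_of_mono_fac hfac
  refine ⟨h.lift k 0 w, hfac, .of_exists_lift (h.lift_snd _ _ _) fun x hx => ?_⟩
  obtain ⟨y, hy⟩ := hk.exists_lift (x ≫ a) (by
    rw [Category.assoc, h.w, ← Category.assoc, hx, zero_comp])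
  refine ⟨y, h.hom_ext ?_ ?_⟩
  · rw [Category.assoc, hfac, hy]
  · rw [Category.assoc, h.lift_snd, comp_zero, hx]

lemma comp_of_isPullback {K P X Y Z : 𝒞} {a : P ⟶ X} {b : P ⟶ Y} {c : X ⟶ Z} {d : Y ⟶ Z}
    {k : K ⟶ P} (h : IsPullback a b c d) (hk : IsKernelOf k b) : IsKernelOf (k ≫ a) c := by
  have hlift {W : 𝒞} (x : W ⟶ X) (hx : x ≫ c = 0) : ∃ y : W ⟶ K, y ≫ k ≫ a = x := by
    have hx' : x ≫ c = (0 : W ⟶ Y) ≫ d := by rw [hx, zero_comp]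
    obtain ⟨y, hy⟩ := hk.exists_lift (h.lift x 0 hx') (h.lift_snd _ _ _)
    exact ⟨y, by rw [← Category.assoc, hy, h.lift_fst]⟩
  have := hk.mono
  have : Mono (k ≫ a) := ⟨fun g g' hg => by
    rw [← cancel_mono k]
    refine h.hom_ext ?_ ?_
    · simpa only [Category.assoc] using hg
    · rw [Category.assoc, Category.assoc, hk.w, comp_zero, comp_zero]⟩
  exact .of_exists_lift (by rw [Category.assoc, h.w, ← Category.assoc, hk.w, zero_comp]) hlift

lemma comp_kernel_ι {K A B C : 𝒞} {p : A ⟶ B} {g : A ⟶ C} [HasKernel p]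
    {c : K ⟶ kernel p} (h : IsKernelOf c (kernel.ι p ≫ g))
    (hg : ∀ {W : 𝒞} (x : W ⟶ A), x ≫ g = 0 → x ≫ p = 0) : IsKernelOf (c ≫ kernel.ι p) g := by
  have := h.mono
  have hw : (c ≫ kernel.ι p) ≫ g = 0 := by rw [Category.assoc, h.w]
  refine .of_exists_lift hw fun x hx => ?_
  obtain ⟨y, hy⟩ := h.exists_lift (kernel.lift p x (hg x hx)) (by
    rw [← Category.assoc, kernel.lift_ι, hx])
  exact ⟨y, by rw [← Category.assoc, hy, kernel.lift_ι]⟩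

end IsKernelOf

lemma isPullback_kernel_map {A B A' B' : 𝒞} (p : A ⟶ B) (q : A' ⟶ B') [HasKernel p] [HasKernel q]
    (t : A ⟶ A') (b : B ⟶ B') [Mono b] (w : p ≫ b = t ≫ q) :
    IsPullback (kernel.map p q t b w) (kernel.ι p) (kernel.ι q) t := by
  refine ⟨⟨kernel.lift_ι _ _ _⟩, ⟨PullbackCone.IsLimit.mk _
    (fun s => kernel.lift p s.snd ?_) (fun s => ?_) (fun s => kernel.lift_ι _ _ _)
    fun s m _ hm => ?_⟩⟩
  · rw [← comp_eq_zero_iff_of_mono _ b, Category.assoc, w, ← Category.assoc, ← s.condition,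
      Category.assoc, kernel.condition, comp_zero]
  · rw [← cancel_mono (kernel.ι q), Category.assoc, kernel.lift_ι, ← Category.assoc,
      kernel.lift_ι, s.condition]
  · rw [← cancel_mono (kernel.ι p), hm, kernel.lift_ι]

end Kernels

namespace SplitShortFive

variable {𝒞 : Type u} [Category.{v} 𝒞] [HasZeroMorphisms 𝒞]

lemma isIso_of_isKernelOf (h : SplitShortFive 𝒞) {K A A' B : 𝒞} {k : K ⟶ A} {f : A ⟶ B}
    {s : B ⟶ A} {k' : K ⟶ A'} {f' : A' ⟶ B} (v : A ⟶ A') (hs : s ≫ f = 𝟙 B)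
    (hk : IsKernelOf k f) (hk' : IsKernelOf k' f') (hkv : k ≫ v = k') (hvf : v ≫ f' = f) :
    IsIso v :=
  h k f s k' f' (s ≫ v) (𝟙 K) v (𝟙 B) hs (by rw [Category.assoc, hvf, hs]) hk.w hk'.w hk.isLimit
    hk'.isLimit (by rw [Category.id_comp, hkv]) (by rw [hvf, Category.comp_id]) inferInstance
    inferInstance

lemma isPullback_of_isKernelOf [HasPullbacks 𝒞] (h : SplitShortFive 𝒞) {K P X Y Z : 𝒞}
    {a : P ⟶ X} {b : P ⟶ Y} {c : X ⟶ Z} {d : Y ⟶ Z} {k : K ⟶ P} {s : Y ⟶ P}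
    (w : a ≫ c = b ≫ d) (hs : s ≫ b = 𝟙 Y) (hb : IsKernelOf k b) (hc : IsKernelOf (k ≫ a) c) :
    IsPullback a b c d := by
  obtain ⟨k', hk'a, hk'⟩ := hc.exists_lift_of_isPullback (.of_hasPullback c d)
  have hkk' : k ≫ pullback.lift a b w = k' := by
    refine pullback.hom_ext ?_ ?_
    · rw [Category.assoc, pullback.lift_fst, hk'a]
    · rw [Category.assoc, pullback.lift_snd, hb.w, hk'.w]
  have : IsIso (pullback.lift a b w) :=
    h.isIso_of_isKernelOf _ hs hb hk' hkk' (pullback.lift_snd _ _ _)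
  exact .of_iso_pullback ⟨w⟩ (asIso (pullback.lift a b w)) (pullback.lift_fst _ _ _)
    (pullback.lift_snd _ _ _)

/-- Both `k` and `s` factor through the equalizer of `x` and `y`, which is therefore invertible. -/
lemma hom_ext_of_isKernelOf [HasEqualizers 𝒞] (h : SplitShortFive 𝒞) {K A B Z : 𝒞} {k : K ⟶ A}
    {f : A ⟶ B} {s : B ⟶ A} (hs : s ≫ f = 𝟙 B) (hk : IsKernelOf k f) {x y : A ⟶ Z}
    (hkxy : k ≫ x = k ≫ y) (hsxy : s ≫ x = s ≫ y) : x = y := by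
  have hs' : equalizer.lift s hsxy ≫ equalizer.ι x y ≫ f = 𝟙 B := by
    rw [← Category.assoc, equalizer.lift_ι, hs]
  have hk' : IsKernelOf (equalizer.lift k hkxy) (equalizer.ι x y ≫ f) := by
    have := hk.mono
    have : Mono (equalizer.lift k hkxy) := mono_of_mono_fac (equalizer.lift_ι k hkxy)
    refine .of_exists_lift (by rw [← Category.assoc, equalizer.lift_ι, hk.w]) fun z hz => ?_
    obtain ⟨w, hw⟩ := hk.exists_lift (z ≫ equalizer.ι x y) (by rw [Category.assoc, hz])
    exact ⟨w, by rw [← cancel_mono (equalizer.ι x y), Category.assoc, equalizer.lift_ι, hw]⟩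
  have : IsIso (equalizer.ι x y) :=
    h.isIso_of_isKernelOf _ hs' hk' hk (equalizer.lift_ι k hkxy) rfl
  exact eq_of_epi_equalizer

lemma mono_of_kernel_ι_eq_zero [HasPullbacks 𝒞] [HasEqualizers 𝒞] (h : SplitShortFive 𝒞) {A B : 𝒞}
    (f : A ⟶ B) [HasKernel f] (hf : kernel.ι f = 0) : Mono f := by
  obtain ⟨k, hk₁, hk⟩ :=
    (isKernelOf_kernel_ι f).exists_lift_of_isPullback (IsPullback.of_hasPullback f f)
  have hk₂ : k ≫ pullback.fst f f = k ≫ pullback.snd f f := by rw [hk₁, hk.w, hf]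
  refine IsKernelPair.mono_of_eq_fst_snd (.of_hasPullback f) ?_
  refine h.hom_ext_of_isKernelOf (s := pullback.lift (𝟙 A) (𝟙 A) rfl) ?_ hk hk₂ ?_
  · exact pullback.lift_snd _ _ _
  · rw [pullback.lift_fst, pullback.lift_snd]

end SplitShortFive

namespace ESliceObj

variable {𝒞 : Type u} [Category.{v} 𝒞] {E : MorphismProperty 𝒞} {B : 𝒞}

@[ext] lemma hom_ext {g h : ESliceObj E B} {φ ψ : g ⟶ h}
    (w : ESliceHom.top φ = ESliceHom.top ψ) : φ = ψ :=
  ESliceHom.ext w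

@[simp] lemma id_top (g : ESliceObj E B) : ESliceHom.top (𝟙 g) = 𝟙 g.dom := rfl

@[simp] lemma comp_top {g h k : ESliceObj E B} (φ : g ⟶ h) (ψ : h ⟶ k) :
    ESliceHom.top (φ ≫ ψ) = ESliceHom.top φ ≫ ESliceHom.top ψ := rfl

/-- The domain functor of the slice category. -/
def forget (E : MorphismProperty 𝒞) (B : 𝒞) : ESliceObj E B ⥤ 𝒞 where
  obj g := g.dom
  map φ := ESliceHom.top φ

instance : (forget E B).ReflectsIsomorphisms where
  reflects {g h} φ hφ := by
    have : IsIso (ESliceHom.top φ) := hφ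
    refine ⟨⟨inv (ESliceHom.top φ), ?_⟩, ?_, ?_⟩
    · rw [IsIso.inv_comp_eq, ESliceHom.w φ]
    · exact hom_ext (IsIso.hom_inv_id (ESliceHom.top φ))
    · exact hom_ext (IsIso.inv_hom_id (ESliceHom.top φ))

lemma isIso_iff_isIso_top {g h : ESliceObj E B} (φ : g ⟶ h) :
    IsIso φ ↔ IsIso (ESliceHom.top φ) :=
  (isIso_iff_of_reflects_iso φ (forget E B)).symm

end ESliceObj

/-- The base-change functor given by chosen pullbacks. -/
noncomputable def PullbackFunctorAlong.ofHasPullbacks {𝒞 : Type u} [Category.{v} 𝒞]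
    [HasPullbacks 𝒞] (E : MorphismProperty 𝒞) [E.IsStableUnderBaseChange] {A B : 𝒞}
    (f : A ⟶ B) : PullbackFunctorAlong E f where
  R :=
    { obj g := ⟨pullback g.hom f, pullback.snd g.hom f, E.pullback_snd _ _ g.mem⟩
      map {g h} φ := ⟨pullback.lift (pullback.fst g.hom f ≫ ESliceHom.top φ) (pullback.snd g.hom f)
        (by rw [Category.assoc, ESliceHom.w φ, pullback.condition]), pullback.lift_snd _ _ _⟩
      map_id g := by
        ext <;> simp
      map_comp φ ψ := by
        ext <;> simp [pullback.lift_fst, pullback.lift_fst_assoc, pullback.lift_snd] }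
  top g := pullback.fst g.hom f
  isPB g := .of_hasPullback g.hom f
  nat φ := pullback.lift_fst _ _ _

namespace PullbackFunctorAlong

variable {𝒞 : Type u} [Category.{v} 𝒞] {E : MorphismProperty 𝒞} {A B : 𝒞} {f : A ⟶ B}
  (P : PullbackFunctorAlong E f)

lemma hom_ext {X : ESliceObj E A} {g : ESliceObj E B} {φ ψ : X ⟶ P.R.obj g}
    (w : ESliceHom.top φ ≫ P.top g = ESliceHom.top ψ ≫ P.top g) : φ = ψ :=
  ESliceObj.hom_ext ((P.isPB g).hom_ext w ((ESliceHom.w φ).trans (ESliceHom.w ψ).symm))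

/-- The transpose of a morphism over `B` from the composite of `X` with `f` to `g`. -/
noncomputable def lift {X : ESliceObj E A} {g : ESliceObj E B} (x : X.dom ⟶ g.dom)
    (w : x ≫ g.hom = X.hom ≫ f) : X ⟶ P.R.obj g where
  top := (P.isPB g).lift x X.hom w
  w := (P.isPB g).lift_snd _ _ _

lemma lift_top {X : ESliceObj E A} {g : ESliceObj E B} (x : X.dom ⟶ g.dom)
    (w : x ≫ g.hom = X.hom ≫ f) : ESliceHom.top (P.lift x w) ≫ P.top g = x :=
  (P.isPB g).lift_fst _ _ _

end PullbackFunctorAlong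

section Monadic

variable {C D : Type*} [Category.{v} C] [Category.{v} D] (R : D ⥤ C)

lemma reflectsIsomorphisms_of_monadicRightAdjoint [MonadicRightAdjoint R] :
    R.ReflectsIsomorphisms :=
  reflectsIsomorphisms_of_iso (Monad.comparisonForget (monadicAdjunction R))

lemma exists_coequalizer_iso_of_isSplitCoequalizer [MonadicRightAdjoint R] {X Y : D}
    (f g : X ⟶ Y) {Z : C} (π : R.obj Y ⟶ Z) (t : IsSplitCoequalizer (R.map f) (R.map g) π) :
    ∃ (_ : HasCoequalizer f g) (e : Z ≅ R.obj (coequalizer f g)),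
      π ≫ e.hom = R.map (coequalizer.π f g) := by
  have : R.IsSplitPair f g := ⟨⟨Z, π, ⟨t⟩⟩⟩
  have := Monad.createsGSplitCoequalizersOfMonadic R f g
  have : HasColimit (parallelPair f g ⋙ R) :=
    hasColimit_of_iso (F := parallelPair (R.map f) (R.map g)) (diagramIsoParallelPair _)
  have : HasCoequalizer f g := hasColimit_of_created (parallelPair f g) R
  have hcoeq := isColimitOfHasCoequalizerOfPreservesColimit R f g
  exact ⟨this, t.isCoequalizer.coconePointUniqueUpToIso hcoeq,
    t.isCoequalizer.comp_coconePointUniqueUpToIso_hom hcoeq WalkingParallelPair.one⟩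

end Monadic

section ExtensionClass

variable {𝒞 : Type u} [Category.{v} 𝒞] {E : MorphismProperty 𝒞}

lemma AxE4.of_section [E.ContainsIdentities] (hE4 : AxE4 E) {A B : 𝒞} {f : A ⟶ B} {s : B ⟶ A}
    (hs : s ≫ f = 𝟙 B) : E f :=
  hE4 s f (hs ▸ E.id_mem B)

/-- The second leg of the test object `B ⨯ Z` over `B` turns maps over `B` into maps to `Z`. -/
lemma ESliceObj.exists_coequalizer_desc_top [HasZeroMorphisms 𝒞] [HasBinaryProducts 𝒞]
    [E.ContainsIdentities] (hE4 : AxE4 E) {B : 𝒞} {X Y : ESliceObj E B} (φ ψ : X ⟶ Y)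
    [HasCoequalizer φ ψ] {Z : 𝒞} (g : Y.dom ⟶ Z)
    (hg : ESliceHom.top φ ≫ g = ESliceHom.top ψ ≫ g) :
    ∃ d : (coequalizer φ ψ).dom ⟶ Z, ESliceHom.top (coequalizer.π φ ψ) ≫ d = g := by
  let B' : ESliceObj E B := ⟨B ⨯ Z, prod.fst, hE4.of_section (prod.lift_fst (𝟙 B) (0 : B ⟶ Z))⟩
  let g' : Y ⟶ B' := ⟨prod.lift Y.hom g, prod.lift_fst _ _⟩
  have hg' : φ ≫ g' = ψ ≫ g' := by
    ext
    · exact (ESliceHom.w (φ ≫ g')).trans (ESliceHom.w (ψ ≫ g')).symm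
    · rw [ESliceObj.comp_top, ESliceObj.comp_top, Category.assoc, Category.assoc, prod.lift_snd, hg]
  refine ⟨ESliceHom.top (coequalizer.desc g' hg') ≫ prod.snd, ?_⟩
  rw [← Category.assoc, ← ESliceObj.comp_top, coequalizer.π_desc]
  exact prod.lift_snd Y.hom g

variable [HasPullbacks 𝒞] [E.IsMultiplicative] [E.IsStableUnderBaseChange]

namespace AxM

lemma isIso_of_isPullback (hM : AxM E) {P M A B : 𝒞} {a : P ⟶ M} {b : P ⟶ A} {m : M ⟶ B}
    {f : A ⟶ B} (h : IsPullback a b m f) (hm : E m) (hf : E f) [IsIso b] : IsIso m := by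
  let m' : ESliceObj E B := ⟨M, m, hm⟩
  let b' : ESliceObj E B := ⟨B, 𝟙 B, E.id_mem B⟩
  let φ : m' ⟶ b' := ⟨m, Category.comp_id m⟩
  let P' := PullbackFunctorAlong.ofHasPullbacks E f
  have hm' : IsIso (P'.R.obj m').hom := by
    rw [← (P'.isPB m').isoIsPullback_hom_snd _ _ h]
    infer_instance
  have hb' : IsIso (P'.R.obj b').hom :=
    have : IsIso b'.hom := inferInstanceAs (IsIso (𝟙 B))
    (P'.isPB b').isIso_snd_of_isIso
  have hφ : IsIso (P'.R.map φ) := by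
    rw [ESliceObj.isIso_iff_isIso_top, ← isIso_comp_right_iff _ (P'.R.obj b').hom, ESliceHom.w]
    exact hm'
  obtain ⟨_⟩ := hM f hf P'
  have := reflectsIsomorphisms_of_monadicRightAdjoint P'.R
  exact (ESliceObj.isIso_iff_isIso_top φ).1 (isIso_of_reflects_iso φ P'.R)

lemma isIso_of_mono (hM : AxM E) {M B : 𝒞} (m : M ⟶ B) [Mono m] (hm : E m) : IsIso m :=
  hM.isIso_of_isPullback (IsKernelPair.id_of_mono m) hm hm

lemma epi [HasEqualizers 𝒞] (hM : AxM E) (hE4 : AxE4 E) {A B : 𝒞} {f : A ⟶ B} (hf : E f) :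
    Epi f where
  left_cancellation u v huv := by
    have : IsIso (equalizer.ι u v) :=
      hM.isIso_of_mono _ (hE4 (equalizer.lift f huv) _ ((equalizer.lift_ι f huv).symm ▸ hf))
    exact eq_of_epi_equalizer

end AxM

end ExtensionClass

/-- A descent datum along `f` on `τ : T ⟶ A`, i.e. an action on `T` of the kernel pair of `f`. A
generalized element of `pullback (τ ≫ f) f` is a pair `(t, a)` of a point `t` of `T` and a point `a`
of `A` in the same fibre of `f` as `τ t`, and `act` transports `t` to the fibre of `τ` over `a`;
`assoc` is `(t · a) · a' = t · a'` for `x = (t, a)`, `y = (t · a, a')` and `z = (t, a')`. -/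
structure DescentDatum {𝒞 : Type u} [Category.{v} 𝒞] [HasPullbacks 𝒞] {A B T : 𝒞} (f : A ⟶ B)
    (τ : T ⟶ A) where
  act : pullback (τ ≫ f) f ⟶ T
  act_comp : act ≫ τ = pullback.snd (τ ≫ f) f
  unit : pullback.lift (𝟙 T) τ (Category.id_comp _) ≫ act = 𝟙 T
  assoc : ∀ {W : 𝒞} (x y z : W ⟶ pullback (τ ≫ f) f),
    y ≫ pullback.fst _ _ = x ≫ act → z ≫ pullback.fst _ _ = x ≫ pullback.fst _ _ →
    z ≫ pullback.snd _ _ = y ≫ pullback.snd _ _ → y ≫ act = z ≫ act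

namespace DescentDatum

variable {𝒞 : Type u} [Category.{v} 𝒞] [HasPullbacks 𝒞] {A B T : 𝒞} {f : A ⟶ B} {τ : T ⟶ A}

section Slice

variable {E : MorphismProperty 𝒞} (hf : E f) (hτ : E τ)

/-- The total object of `τ` over `B`. -/
abbrev total [E.IsMultiplicative] : ESliceObj E B := ⟨T, τ ≫ f, E.comp_mem _ _ hτ hf⟩

variable [E.IsMultiplicative] [E.IsStableUnderBaseChange]

/-- The object over `B` on which the action is defined, with domain `pullback (τ ≫ f) f`. -/
noncomputable abbrev actionSource : ESliceObj E B :=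
  let X := (PullbackFunctorAlong.ofHasPullbacks E f).R.obj (total hf hτ)
  ⟨X.dom, X.hom ≫ f, E.comp_mem _ _ X.mem hf⟩

/-- The action as a morphism over `B`. -/
noncomputable def actHom (D : DescentDatum f τ) : actionSource hf hτ ⟶ total hf hτ where
  top := D.act
  w := (Category.assoc _ _ _).symm.trans (congrArg (· ≫ f) D.act_comp)

/-- The projection that forgets the point at which one acts, as a morphism over `B`. -/
noncomputable def projHom : actionSource (E := E) hf hτ ⟶ total hf hτ where
  top := (PullbackFunctorAlong.ofHasPullbacks E f).top (total hf hτ)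
  w := ((PullbackFunctorAlong.ofHasPullbacks E f).isPB (total hf hτ)).w

/-- After base change along `f`, the action is a split coequalizer of `actHom` and `projHom`. -/
noncomputable def isSplitCoequalizer (D : DescentDatum f τ) :
    let P := PullbackFunctorAlong.ofHasPullbacks E f
    IsSplitCoequalizer (P.R.map (D.actHom hf hτ)) (P.R.map (projHom hf hτ))
      (⟨D.act, D.act_comp⟩ : P.R.obj (total hf hτ) ⟶ ⟨T, τ, hτ⟩) :=
  let P := PullbackFunctorAlong.ofHasPullbacks E f
  { rightSection := P.lift (𝟙 T) (Category.id_comp _)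
    leftSection := P.lift (𝟙 (P.R.obj (total hf hτ)).dom) (Category.id_comp _)
    condition := ESliceObj.hom_ext (D.assoc (P.top (actionSource hf hτ)) _ _
      (P.nat (D.actHom hf hτ)) (P.nat (projHom hf hτ))
      ((ESliceHom.w (P.R.map (projHom hf hτ))).trans
        (ESliceHom.w (P.R.map (D.actHom hf hτ))).symm))
    rightSection_π := ESliceObj.hom_ext <| by
      refine Eq.trans (congrArg (· ≫ D.act) (pullback.hom_ext ?_ ?_)) D.unit
      · exact (P.lift_top _ _).trans (pullback.lift_fst _ _ _).symm
      · exact (ESliceHom.w (P.lift _ _)).trans (pullback.lift_snd _ _ _).symm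
    leftSection_bottom := P.hom_ext <| by
      rw [ESliceObj.comp_top, Category.assoc, P.nat]
      exact ((Category.assoc _ _ _).symm.trans (congrArg (· ≫ P.top (total hf hτ))
        (P.lift_top _ _)))
    leftSection_top := P.hom_ext <| by
      rw [ESliceObj.comp_top, ESliceObj.comp_top, Category.assoc, P.nat, Category.assoc, P.lift_top]
      refine ((Category.assoc _ _ _).symm.trans (congrArg (· ≫ D.act)
        (P.lift_top _ _))).trans ?_
      exact (Category.id_comp _).trans (Category.comp_id _).symm }

end Slice

/-- The tautological datum on the identity: a point `t` is transported over `a` to `a` itself. -/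
noncomputable def ofId (f : A ⟶ B) : DescentDatum f (𝟙 A) where
  act := pullback.snd (𝟙 A ≫ f) f
  act_comp := Category.comp_id _
  unit := pullback.lift_snd _ _ _
  assoc _ _ _ _ _ h := h.symm

end DescentDatum

theorem DescentDatum.exists_isPullback_isColimit {𝒞 : Type u} [Category.{v} 𝒞]
    [HasZeroMorphisms 𝒞] [HasFiniteLimits 𝒞] {A B T : 𝒞} {f : A ⟶ B} {τ : T ⟶ A}
    {E : MorphismProperty 𝒞} [E.IsMultiplicative] [E.IsStableUnderBaseChange] (hM : AxM E)
    (hE4 : AxE4 E) (hf : E f) (hτ : E τ) (D : DescentDatum f τ) :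
    ∃ (M : 𝒞) (m : M ⟶ B) (π : T ⟶ M), E m ∧ IsPullback π τ m f ∧
      ∃ w : D.act ≫ π = pullback.fst (τ ≫ f) f ≫ π, Nonempty (IsColimit (Cofork.ofπ π w)) := by
  let P := PullbackFunctorAlong.ofHasPullbacks E f
  let a := D.actHom hf hτ
  let p := projHom (E := E) hf hτ
  let t := D.isSplitCoequalizer hf hτ
  obtain ⟨_⟩ := hM f hf P
  obtain ⟨_, e, he⟩ := exists_coequalizer_iso_of_isSplitCoequalizer P.R a p _ t
  let π := coequalizer.π a p
  have he' : ESliceHom.top e.hom ≫ P.top _ = ESliceHom.top π := by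
    have : e.hom = t.rightSection ≫ P.R.map π := by
      rw [← he, ← Category.assoc, t.rightSection_π, Category.id_comp]
    rw [this, ESliceObj.comp_top, Category.assoc, P.nat, ← Category.assoc]
    exact (congrArg (· ≫ ESliceHom.top π) (P.lift_top _ _)).trans (Category.id_comp _)
  have hτ' : ESliceHom.top e.hom ≫ (P.R.obj (coequalizer a p)).hom = τ := ESliceHom.w e.hom
  have : IsIso (ESliceHom.top e.hom) := (ESliceObj.isIso_iff_isIso_top _).1 inferInstance
  have hpb : IsPullback (ESliceHom.top π) τ (coequalizer a p).hom f :=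
    (P.isPB _).of_iso (asIso (ESliceHom.top e.hom)).symm (Iso.refl _) (Iso.refl _) (Iso.refl _)
      (by rw [← he']; simp) ((Category.comp_id _).trans ((IsIso.eq_inv_comp _).2 hτ'))
      (by simp) (by simp)
  have : Epi (ESliceHom.top π) := hM.epi hE4 (E.of_isPullback hpb.flip hf)
  refine ⟨_, (coequalizer a p).hom, ESliceHom.top π, (coequalizer a p).mem, hpb,
    congrArg ESliceHom.top (coequalizer.condition a p), ⟨?_⟩⟩
  refine Cofork.IsColimit.mk' _ fun s => ?_
  have hs := ESliceObj.exists_coequalizer_desc_top hE4 a p s.π s.condition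
  exact ⟨hs.choose, hs.choose_spec, fun hm =>
    (cancel_epi (ESliceHom.top π)).1 (hm.trans hs.choose_spec.symm)⟩

theorem IsKernelOf.nonempty_isColimit_cokernelCofork {𝒞 : Type u} [Category.{v} 𝒞]
    [HasZeroMorphisms 𝒞] [HasFiniteLimits 𝒞] {E : MorphismProperty 𝒞} [E.IsMultiplicative]
    [E.IsStableUnderBaseChange] (hpm : SplitShortFive 𝒞) (hM : AxM E) (hE4 : AxE4 E) {K A B : 𝒞}
    {k : K ⟶ A} {f : A ⟶ B} (hk : IsKernelOf k f) (hf : E f) :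
    Nonempty (IsColimit (CokernelCofork.ofπ f hk.w)) := by
  obtain ⟨M, m, π, hm, hpb, _, ⟨hπ⟩⟩ :=
    (DescentDatum.ofId f).exists_isPullback_isColimit hM hE4 hf (E.id_mem A)
  have : IsIso m := hM.isIso_of_isPullback hpb hm hf
  have : Epi f := hM.epi hE4 hf
  obtain ⟨k', hk'snd, hk'⟩ :=
    hk.exists_lift_of_isPullback (IsPullback.of_hasPullback (𝟙 A ≫ f) f).flip
  have hdesc {Z : 𝒞} (g : A ⟶ Z) (hg : k ≫ g = 0) : ∃ d : B ⟶ Z, f ≫ d = g := by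
    have hg' : pullback.snd (𝟙 A ≫ f) f ≫ g = pullback.fst (𝟙 A ≫ f) f ≫ g := by
      refine hpm.hom_ext_of_isKernelOf (s := pullback.lift (𝟙 A) (𝟙 A) (by simp))
        (pullback.lift_fst _ _ _) hk' ?_ ?_
      · rw [← Category.assoc, hk'snd, hg, ← Category.assoc, hk'.w, zero_comp]
      · exact (pullback.lift_snd_assoc _ _ _ g).trans (pullback.lift_fst_assoc _ _ _ g).symm
    obtain ⟨d, hd⟩ := Cofork.IsColimit.desc' hπ g hg'
    have hf' : f = π ≫ m := (Category.id_comp f).symm.trans hpb.w.symm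
    refine ⟨inv m ≫ d, ?_⟩
    rw [hf', Category.assoc, IsIso.hom_inv_id_assoc]
    exact hd
  exact ⟨CokernelCofork.IsColimit.ofπ' f hk.w fun g hg => ⟨_, (hdesc g hg).choose_spec⟩⟩

section Transport

variable {𝒞 : Type u} [Category.{v} 𝒞] [HasPullbacks 𝒞] {A B R T : 𝒞} {f : A ⟶ B} {p₁ p₂ : R ⟶ A}
  {r : R ⟶ T} {τ : T ⟶ A}

/-- Let `r` be a quotient over `A` of the first projection of the kernel pair `R` of `f`. The
morphism `act` acts on it by transport when it sends the class `r (a, b)` of a point of `R`, taken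
over the point `a'` in the same fibre of `f`, to the class `r (a', b)`. -/
def ActsByTransport (p₁ p₂ : R ⟶ A) (r : R ⟶ T) (act : pullback (τ ≫ f) f ⟶ T) : Prop :=
  ∀ {V : 𝒞} (x : V ⟶ pullback (τ ≫ f) f) (y y' : V ⟶ R), x ≫ pullback.fst _ _ = y ≫ r →
    y' ≫ p₁ = x ≫ pullback.snd _ _ → y' ≫ p₂ = y ≫ p₂ → x ≫ act = y' ≫ r

lemma exists_transport (h : IsPullback p₁ p₂ f f) (hrτ : r ≫ τ = p₁) {V : 𝒞}
    (x : V ⟶ pullback (τ ≫ f) f) (y : V ⟶ R) (hxy : x ≫ pullback.fst _ _ = y ≫ r) :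
    ∃ y' : V ⟶ R, y' ≫ p₁ = x ≫ pullback.snd _ _ ∧ y' ≫ p₂ = y ≫ p₂ := by
  have hw : (x ≫ pullback.snd _ _) ≫ f = (y ≫ p₂) ≫ f := calc
    (x ≫ pullback.snd _ _) ≫ f = (x ≫ pullback.fst _ _) ≫ τ ≫ f := by
      rw [Category.assoc, ← pullback.condition, Category.assoc]
    _ = y ≫ (r ≫ τ) ≫ f := by rw [hxy, Category.assoc, Category.assoc]
    _ = (y ≫ p₂) ≫ f := by rw [hrτ, h.w, Category.assoc]
  exact ⟨h.lift _ _ hw, h.lift_fst _ _ _, h.lift_snd _ _ _⟩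

namespace ActsByTransport

variable {act : pullback (τ ≫ f) f ⟶ T}

lemma comp_eq_snd (ha : ActsByTransport p₁ p₂ r act) (h : IsPullback p₁ p₂ f f) (hrτ : r ≫ τ = p₁)
    [Epi (pullback.fst (pullback.fst (τ ≫ f) f) r)] : act ≫ τ = pullback.snd (τ ≫ f) f := by
  let ρ := pullback.fst (pullback.fst (τ ≫ f) f) r
  obtain ⟨y', hy'₁, hy'₂⟩ := exists_transport h hrτ ρ _ pullback.condition
  rw [← cancel_epi ρ, ← Category.assoc, ha ρ _ y' pullback.condition hy'₁ hy'₂, Category.assoc,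
    hrτ, hy'₁]

lemma unit (ha : ActsByTransport p₁ p₂ r act) (hrτ : r ≫ τ = p₁) [Epi r] :
    pullback.lift (𝟙 T) τ (Category.id_comp _) ≫ act = 𝟙 T := by
  rw [← cancel_epi r, ← Category.assoc, ha _ (𝟙 R) (𝟙 R) _ _ rfl, Category.id_comp,
    Category.comp_id]
  · rw [Category.assoc, pullback.lift_fst, Category.comp_id, Category.id_comp]
  · rw [Category.assoc, pullback.lift_snd, hrτ, Category.id_comp]

lemma assoc (ha : ActsByTransport p₁ p₂ r act) (h : IsPullback p₁ p₂ f f) (hrτ : r ≫ τ = p₁)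
    {V : 𝒞} (x y z : V ⟶ pullback (τ ≫ f) f) [Epi (pullback.fst (x ≫ pullback.fst (τ ≫ f) f) r)]
    (hxy : y ≫ pullback.fst _ _ = x ≫ act) (hzx : z ≫ pullback.fst _ _ = x ≫ pullback.fst _ _)
    (hzy : z ≫ pullback.snd _ _ = y ≫ pullback.snd _ _) : y ≫ act = z ≫ act := by
  let ρ := pullback.fst (x ≫ pullback.fst (τ ≫ f) f) r
  let t := pullback.snd (x ≫ pullback.fst (τ ≫ f) f) r
  have hx : (ρ ≫ x) ≫ pullback.fst _ _ = t ≫ r :=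
    (Category.assoc _ _ _).trans pullback.condition
  have hz : (ρ ≫ z) ≫ pullback.fst _ _ = t ≫ r := by
    rw [Category.assoc, hzx, ← Category.assoc, hx]
  obtain ⟨x', hx'₁, hx'₂⟩ := exists_transport h hrτ _ _ hx
  obtain ⟨z', hz'₁, hz'₂⟩ := exists_transport h hrτ _ _ hz
  have hy : (ρ ≫ y) ≫ pullback.fst _ _ = x' ≫ r := by
    rw [Category.assoc, hxy, ← Category.assoc, ha _ t x' hx hx'₁ hx'₂]
  rw [← cancel_epi ρ, ← Category.assoc, ← Category.assoc, ha _ t z' hz hz'₁ hz'₂]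
  exact ha _ x' z' hy (by rw [hz'₁, Category.assoc, hzy, Category.assoc]) (by rw [hz'₂, hx'₂])

end ActsByTransport

end Transport

section KernelPairQuotient

variable {𝒞 : Type u} [Category.{v} 𝒞] [HasZeroMorphisms 𝒞] [HasFiniteLimits 𝒞]
  {E : MorphismProperty 𝒞} [E.IsMultiplicative] [E.IsStableUnderBaseChange] {A B R T : 𝒞}
  {f : A ⟶ B} {p₁ p₂ : R ⟶ A} {r : R ⟶ T} {τ : T ⟶ A}

/-- Pulled back along `r`, the transport of `r (a, b)` over `a'` is the class of the point `(a', b)`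
of `R`; it agrees with `(a, b)` when `a'` and `r (a, b)` vanish, hence descends along the normal
epimorphism `d`. -/
lemma exists_actsByTransport (hpm : SplitShortFive 𝒞) (hM : AxM E) (hE4 : AxE4 E)
    (h : IsPullback p₁ p₂ f f) (hr : E r) (hrτ : r ≫ τ = p₁) :
    ∃ act : pullback (τ ≫ f) f ⟶ T, ActsByTransport p₁ p₂ r act := by
  let d := pullback.fst (pullback.fst (τ ≫ f) f) r
  let w := pullback.snd (pullback.fst (τ ≫ f) f) r
  have hdw : d ≫ pullback.fst _ _ = w ≫ r := pullback.condition
  obtain ⟨e, he₁, he₂⟩ := exists_transport h hrτ d w hdw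
  have hker : kernel.ι d ≫ e = kernel.ι d ≫ w := by
    refine h.hom_ext ?_ ?_
    · rw [Category.assoc, he₁, ← Category.assoc, kernel.condition, zero_comp, ← hrτ, Category.assoc,
        ← Category.assoc w, ← hdw, Category.assoc, ← Category.assoc, kernel.condition, zero_comp]
    · rw [Category.assoc, he₂, Category.assoc]
  have hzero : kernel.ι d ≫ e ≫ r = 0 := by
    rw [← Category.assoc, hker, Category.assoc, ← hdw, ← Category.assoc, kernel.condition,
      zero_comp]
  obtain ⟨hd⟩ := (isKernelOf_kernel_ι d).nonempty_isColimit_cokernelCofork hpm hM hE4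
    (E.pullback_fst _ _ hr)
  obtain ⟨act, hact⟩ := CokernelCofork.IsColimit.desc' hd (e ≫ r) hzero
  refine ⟨act, fun x y y' hxy hy'₁ hy'₂ => ?_⟩
  have hl : pullback.lift x y hxy ≫ e = y' := by
    refine h.hom_ext ?_ ?_
    · rw [Category.assoc, he₁, hy'₁, ← Category.assoc, pullback.lift_fst]
    · rw [Category.assoc, he₂, hy'₂, ← Category.assoc, pullback.lift_snd]
  calc x ≫ act = pullback.lift x y hxy ≫ d ≫ act := (pullback.lift_fst_assoc _ _ _ _).symm
    _ = pullback.lift x y hxy ≫ e ≫ r := congrArg _ hact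
    _ = y' ≫ r := by rw [← Category.assoc, hl]

theorem exists_factorization_of_quotient_kernelPair (hpm : SplitShortFive 𝒞) (hM : AxM E)
    (hE4 : AxE4 E) (h : IsPullback p₁ p₂ f f) (hf : E f) (hr : E r) (hrτ : r ≫ τ = p₁) :
    ∃ (M : 𝒞) (m : M ⟶ B) (π : T ⟶ M) (q : A ⟶ M), E m ∧ E q ∧ q ≫ m = f ∧ IsPullback π τ m f ∧
      r ≫ π = p₂ ≫ q := by
  obtain ⟨act, hact⟩ := exists_actsByTransport (f := f) (τ := τ) hpm hM hE4 h hr hrτ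
  have hepi {V : 𝒞} (x : V ⟶ T) : Epi (pullback.fst x r) := hM.epi hE4 (E.pullback_fst _ _ hr)
  have : Epi r := hM.epi hE4 hr
  obtain ⟨δ, hδ₁, hδ₂⟩ : ∃ δ : A ⟶ R, δ ≫ p₁ = 𝟙 A ∧ δ ≫ p₂ = 𝟙 A :=
    ⟨h.lift (𝟙 A) (𝟙 A) rfl, h.lift_fst _ _ _, h.lift_snd _ _ _⟩
  have hδrτ : (δ ≫ r) ≫ τ = 𝟙 A := by rw [Category.assoc, hrτ, hδ₁]
  let D : DescentDatum f τ := ⟨act, hact.comp_eq_snd h hrτ, hact.unit hrτ,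
    fun x y z => hact.assoc h hrτ x y z⟩
  obtain ⟨M, m, π, hm, hπ, hactπ, -⟩ :=
    D.exists_isPullback_isColimit hM hE4 hf (hE4.of_section hδrτ)
  have hw : r ≫ τ ≫ f = p₂ ≫ f := by rw [← Category.assoc, hrτ, h.w]
  have hrπ : r ≫ π = p₂ ≫ δ ≫ r ≫ π := by
    have hδr : pullback.lift r p₂ hw ≫ act = (p₂ ≫ δ) ≫ r := by
      refine hact _ (𝟙 R) _ ?_ ?_ ?_
      · rw [pullback.lift_fst, Category.id_comp]
      · rw [pullback.lift_snd, Category.assoc, hδ₁, Category.comp_id]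
      · rw [Category.assoc, hδ₂, Category.comp_id, Category.id_comp]
    calc r ≫ π = pullback.lift r p₂ hw ≫ pullback.fst _ _ ≫ π :=
          (pullback.lift_fst_assoc _ _ _ _).symm
      _ = pullback.lift r p₂ hw ≫ act ≫ π := congrArg _ hactπ.symm
      _ = p₂ ≫ δ ≫ r ≫ π := by rw [← Category.assoc, hδr]; simp only [Category.assoc]
  refine ⟨M, m, π, δ ≫ r ≫ π, hm, hE4 p₂ _ ?_, ?_, hπ, hrπ⟩
  · exact hrπ ▸ E.comp_mem _ _ hr (E.of_isPullback hπ.flip hf)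
  · rw [Category.assoc, Category.assoc, hπ.w, ← Category.assoc, ← Category.assoc, hδrτ,
      Category.id_comp]

end KernelPairQuotient

/-- A reflection of `𝒞` onto the full subcategory on `Z`, as an endofunctor with a unit. -/
structure ReflectionOnto {𝒞 : Type u} [Category.{v} 𝒞] (Z : ObjectProperty 𝒞) where
  L : 𝒞 ⥤ 𝒞
  unit : 𝟭 𝒞 ⟶ L
  mem : ∀ C : 𝒞, Z (L.obj C)
  existsUnique_lift : ∀ {C D : 𝒞}, Z D → ∀ f : C ⟶ D, ∃! g : L.obj C ⟶ D, unit.app C ≫ g = f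

namespace ReflectionOnto

variable {𝒞 : Type u} [Category.{v} 𝒞] {Z : ObjectProperty 𝒞} (ρ : ReflectionOnto Z)

lemma hom_ext {C D : 𝒞} (hD : Z D) {g g' : ρ.L.obj C ⟶ D}
    (h : ρ.unit.app C ≫ g = ρ.unit.app C ≫ g') : g = g' :=
  (ρ.existsUnique_lift hD _).unique h rfl

lemma unit_naturality {A B : 𝒞} (f : A ⟶ B) :
    ρ.unit.app A ≫ ρ.L.map f = f ≫ ρ.unit.app B :=
  (ρ.unit.naturality f).symm

/-- A morphism is trivial when the naturality square of the unit at it is a pullback. -/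
def IsTrivial {A B : 𝒞} (f : A ⟶ B) : Prop :=
  IsPullback (ρ.unit.app A) f (ρ.L.map f) (ρ.unit.app B)

/-- If `r` is an epimorphism comparing `p` with the base change `τ` of `L p` along the unit, then
`L r` is invertible. -/
lemma isTrivial_of_isPullback_map {R T A : 𝒞} {p : R ⟶ A} {t : T ⟶ ρ.L.obj R} {τ : T ⟶ A}
    (h : IsPullback t τ (ρ.L.map p) (ρ.unit.app A)) (r : R ⟶ T) [Epi r] (hrt : r ≫ t = ρ.unit.app R)
    (hrτ : r ≫ τ = p) : ρ.IsTrivial τ := by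
  have htr : t ≫ ρ.L.map r = ρ.unit.app T := by
    rw [← cancel_epi r, ← Category.assoc, hrt, ρ.unit_naturality]
  obtain ⟨g, hg, -⟩ := ρ.existsUnique_lift (ρ.mem R) t
  have : IsIso (ρ.L.map r) := by
    refine ⟨g, ρ.hom_ext (ρ.mem R) ?_, ρ.hom_ext (ρ.mem T) ?_⟩
    · rw [← Category.assoc, ρ.unit_naturality, Category.assoc, hg, hrt, Category.comp_id]
    · rw [← Category.assoc, hg, htr, Category.comp_id]
  have hLr : ρ.L.map r ≫ ρ.L.map τ = ρ.L.map p := by rw [← ρ.L.map_comp, hrτ]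
  exact h.of_iso (Iso.refl T) (asIso (ρ.L.map r)) (Iso.refl A) (Iso.refl _)
    (by simpa using htr) (by simp) (by simpa using hLr.symm) (by simp)

variable [HasZeroMorphisms 𝒞]

lemma mem_of_isKernelOf (ρ : ReflectionOnto Z) [Z.IsClosedUnderIsomorphisms] {K A B : 𝒞}
    {k : K ⟶ A} {f : A ⟶ B} (hk : IsKernelOf k f) (hA : Z A) (hB : Z B) : Z K := by
  have := hk.mono
  obtain ⟨k', hk', -⟩ := ρ.existsUnique_lift hA k
  have hk'f : k' ≫ f = 0 := ρ.hom_ext hB (by rw [← Category.assoc, hk', hk.w, comp_zero])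
  obtain ⟨s, hs⟩ := hk.exists_lift k' hk'f
  have hs₁ : ρ.unit.app K ≫ s = 𝟙 K := by
    rw [← cancel_mono k, Category.assoc, hs, hk']
    exact (Category.id_comp k).symm
  have hs₂ : s ≫ ρ.unit.app K = 𝟙 (ρ.L.obj K) :=
    ρ.hom_ext (ρ.mem K) (by
      rw [← Category.assoc, hs₁, Category.comp_id]
      exact Category.id_comp (ρ.unit.app K))
  exact Z.prop_of_iso ⟨s, ρ.unit.app K, hs₂, hs₁⟩ (ρ.mem K)

lemma mem_of_isTrivial [Z.IsClosedUnderIsomorphisms] {K A B : 𝒞} {k : K ⟶ A} {f : A ⟶ B}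
    (hf : ρ.IsTrivial f) (hk : IsKernelOf k f) : Z K :=
  ρ.mem_of_isKernelOf (hk.comp_of_isPullback hf) (ρ.mem A) (ρ.mem B)

lemma mem_of_isTrivial_fst [Z.IsClosedUnderIsomorphisms] {K R A B : 𝒞} {k : K ⟶ A} {f : A ⟶ B}
    {p₁ p₂ : R ⟶ A} (h : IsPullback p₁ p₂ f f) (hp₁ : ρ.IsTrivial p₁) (hk : IsKernelOf k f) :
    Z K := by
  obtain ⟨k', -, hk'⟩ := hk.exists_lift_of_isPullback h.flip
  exact ρ.mem_of_isTrivial hp₁ hk'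

lemma isTrivial_of_isPullback_of_section [HasFiniteLimits 𝒞] (hpm : SplitShortFive 𝒞)
    {T P M A : 𝒞} {a : T ⟶ P} {τ : T ⟶ A} {p : P ⟶ M} {q : A ⟶ M} {s : M ⟶ P} (hs : s ≫ p = 𝟙 M)
    (h : IsPullback a τ p q)
    (hL : IsPullback (ρ.L.map a) (ρ.L.map τ) (ρ.L.map p) (ρ.L.map q)) (hτ : ρ.IsTrivial τ) :
    ρ.IsTrivial p := by
  have hk := isKernelOf_kernel_ι τ
  have hLk : IsKernelOf ((kernel.ι τ ≫ ρ.unit.app T) ≫ ρ.L.map a) (ρ.L.map p) :=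
    (hk.comp_of_isPullback hτ).comp_of_isPullback hL
  refine hpm.isPullback_of_isKernelOf (ρ.unit_naturality p) hs (hk.comp_of_isPullback h) ?_
  have heq : (kernel.ι τ ≫ ρ.unit.app T) ≫ ρ.L.map a = (kernel.ι τ ≫ a) ≫ ρ.unit.app P :=
    (Category.assoc _ _ _).trans
      ((congrArg _ (ρ.unit_naturality a)).trans (Category.assoc _ _ _).symm)
  exact heq ▸ hLk

end ReflectionOnto

namespace GaloisStructure

variable {𝒞 : Type u} [Category.{v} 𝒞] (G : GaloisStructure 𝒞)

instance : G.E.IsMultiplicative where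
  id_mem X := G.E1 (𝟙 X) inferInstance
  comp_mem f g hf hg := G.E3 f g hf hg

instance : G.E.IsStableUnderBaseChange where
  of_isPullback {X Y Y' S f g f' g'} h hg := by
    obtain ⟨P, p₁, p₂, hP, hp₁⟩ := G.E2 f g hg
    rw [← h.flip.isoIsPullback_hom_fst _ _ hP]
    exact G.E3 _ _ (G.E1 _ inferInstance) hp₁

/-- The full subcategory `𝒳`. -/
def subcategory : ObjectProperty 𝒞 := G.inX

instance : G.subcategory.IsClosedUnderIsomorphisms where
  of_iso := G.inX_iso

/-- The reflection of `𝒞` onto `𝒳`. -/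
def reflection : ReflectionOnto G.subcategory where
  L := G.I
  unit := G.η
  mem := G.I_mem
  existsUnique_lift := G.refl_univ

end GaloisStructure

namespace SecondStructure

variable {𝒞 : Type u} [Category.{v} 𝒞] {G : GaloisStructure 𝒞} (S : SecondStructure G)

/-- The full subcategory `𝒴`. -/
def subcategory : ObjectProperty 𝒞 := S.inY

instance : S.subcategory.IsClosedUnderIsomorphisms where
  of_iso := S.inY_iso

/-- The composite reflection of `𝒞` onto `𝒴`. -/
def reflection : ReflectionOnto S.subcategory where
  L := G.I ⋙ S.Fr
  unit := G.η ≫ Functor.whiskerLeft G.I S.θ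
  mem C := S.Fr_mem _ (G.I_mem C)
  existsUnique_lift {C D} hD f := by
    obtain ⟨g, hg, hg'⟩ := G.refl_univ (S.Y_sub_X D hD) f
    obtain ⟨h, hh, hh'⟩ := S.refl_univ (G.I_mem C) hD g
    refine ⟨h, ?_, fun h' hh'' => hh' _ (hg' _ ?_)⟩
    · rw [← hg, ← hh]
      exact Category.assoc _ _ _
    · rw [← hh'']
      exact (Category.assoc _ _ _).symm

lemma E_θ {K : 𝒞} (hK : G.inX K) : G.E (S.θ.app K) := G.F_sub_E _ (S.θ_mem K hK)

end SecondStructure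

namespace SecondStructure

variable {𝒞 : Type u} [Category.{v} 𝒞] {G : GaloisStructure 𝒞} {S : SecondStructure G}
  [HasZeroMorphisms 𝒞]

lemma isKernelOf_Fr_map (hproto : ProtoadditiveOn G.inX S.Fr) {K A B : 𝒞} {k : K ⟶ A} {f : A ⟶ B}
    {s : B ⟶ A} (hs : s ≫ f = 𝟙 B) (hA : G.inX A) (hB : G.inX B) (hk : IsKernelOf k f) :
    IsKernelOf (S.Fr.map k) (S.Fr.map f) := by
  have hK : G.inX K := G.reflection.mem_of_isKernelOf hk hA hB
  obtain ⟨w, hw⟩ := hproto.preserves k f s hK hA hB hs hk.w hk.isLimit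
  exact ⟨w, hw⟩

variable [HasFiniteLimits 𝒞]

lemma preservesType1_comp (hpm : SplitShortFive 𝒞) (htype1 : PreservesType1 G.E G.I)
    (hproto : ProtoadditiveOn G.inX S.Fr) : PreservesType1 G.E (G.I ⋙ S.Fr) := by
  intro A B D C k l g h s hs hg hh hpb
  have hI := htype1 k l g h s hs hg hh hpb
  have hIs : G.I.map s ≫ G.I.map g = 𝟙 (G.I.obj C) := by rw [← G.I.map_comp, hs, G.I.map_id]
  obtain ⟨t, ht⟩ : ∃ t : D ⟶ A, t ≫ l = 𝟙 D :=
    ⟨hpb.lift (h ≫ s) (𝟙 D) (by simp [hs]), hpb.lift_snd _ _ _⟩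
  have hIt : G.I.map t ≫ G.I.map l = 𝟙 (G.I.obj D) := by rw [← G.I.map_comp, ht, G.I.map_id]
  have hk := isKernelOf_kernel_ι (G.I.map l)
  refine hpm.isPullback_of_isKernelOf (s := S.Fr.map (G.I.map t))
    (k := S.Fr.map (kernel.ι (G.I.map l))) ?_ ?_
    (isKernelOf_Fr_map hproto hIt (G.I_mem A) (G.I_mem D) hk) ?_
  · rw [← Functor.map_comp, ← Functor.map_comp, hpb.w]
  · rw [Functor.comp_map, ← S.Fr.map_comp, hIt, S.Fr.map_id]; rfl
  · rw [Functor.comp_map, ← S.Fr.map_comp]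
    exact isKernelOf_Fr_map hproto hIs (G.I_mem B) (G.I_mem C) (hk.comp_of_isPullback hI)

/-- The kernel of `r` is the `Γ'`-radical of `Ker p`: protoadditivity identifies the kernel of
`Fr (I p)` with `Fr (Ker p)`, and `T` is the base change of `Fr (I p)` along the unit at `A`. -/
theorem exists_trivialComp_factorization (hM : AxM G.E) (hE4 : AxE4 G.E) (hE5 : AxE5 G.E)
    (hproto : ProtoadditiveOn G.inX S.Fr) {K R A : 𝒞} {p : R ⟶ A} {s : A ⟶ R} {k : K ⟶ R}
    (hs : s ≫ p = 𝟙 A) (hp : G.E p) (hpt : G.Trivial p) (hk : IsKernelOf k p) :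
    ∃ (T : 𝒞) (τ : T ⟶ A) (r : R ⟶ T), G.E r ∧ r ≫ τ = p ∧ S.TrivialComp τ ∧
      ∀ {W : 𝒞} (g : W ⟶ K), g ≫ k ≫ r = 0 → g ≫ S.θ.app K = 0 := by
  have hK : G.inX K := G.reflection.mem_of_isTrivial hpt hk
  have hkη : IsKernelOf (k ≫ G.η.app R) (G.I.map p) := hk.comp_of_isPullback hpt
  have hIs : G.I.map s ≫ G.I.map p = 𝟙 (G.I.obj A) := by rw [← G.I.map_comp, hs, G.I.map_id]
  have hT := IsPullback.of_hasPullback (S.Fr.map (G.I.map p)) (S.unit A)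
  obtain ⟨j, hj₁, hj⟩ :=
    (isKernelOf_Fr_map hproto hIs (G.I_mem R) (G.I_mem A) hkη).exists_lift_of_isPullback hT
  have hw : S.unit R ≫ S.Fr.map (G.I.map p) = p ≫ S.unit A := S.reflection.unit_naturality p
  have hr₁ := hT.lift_fst _ _ hw
  have hr₂ := hT.lift_snd _ _ hw
  set r := hT.lift _ _ hw
  have hθj : S.θ.app K ≫ j = k ≫ r := by
    refine hT.hom_ext ?_ ?_
    · rw [Category.assoc, Category.assoc, hj₁, hr₁]
      exact (S.θ.naturality _).symm.trans (Category.assoc _ _ _)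
    · rw [Category.assoc, Category.assoc, hj.w, hr₂, hk.w, comp_zero]
  have hr : G.E r := hE5 k j p _ r _ hr₂ hθj hk.w hj.w hk.isLimit hj.isLimit hp (E_θ S hK)
  have := hM.epi hE4 hr
  refine ⟨_, _, r, hr, hr₂, S.reflection.isTrivial_of_isPullback_map hT r hr₁ hr₂, fun g hg => ?_⟩
  have := hj.mono
  rw [← comp_eq_zero_iff_of_mono _ j, Category.assoc, hθj, hg]

/-- The section `s` of a kernel-pair projection of `m` makes its pullback along `q` one of type (1),
so triviality descends along `q`. -/
lemma normalComp_of_isPullback (hpm : SplitShortFive 𝒞) (htype1 : PreservesType1 G.E G.I)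
    (hproto : ProtoadditiveOn G.inX S.Fr) {T M A B : 𝒞} {π : T ⟶ M} {τ : T ⟶ A} {m : M ⟶ B}
    {q : A ⟶ M} (hm : G.E m) (hq : G.E q) (h : IsPullback π τ m (q ≫ m)) (hτ : S.TrivialComp τ) :
    S.NormalComp m := by
  refine ⟨hm, fun {N} π₁ π₂ hN => ?_⟩
  have hw : (τ ≫ q) ≫ m = π ≫ m := by rw [h.w, Category.assoc]
  have hv₂ : hN.lift _ _ hw ≫ π₂ = π := hN.lift_snd _ _ _
  have hv : IsPullback (hN.lift _ _ hw) τ π₁ q :=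
    .of_right (by rwa [hv₂]) (hN.lift_fst _ _ _) hN.flip
  have hs : hN.lift (𝟙 M) (𝟙 M) rfl ≫ π₁ = 𝟙 M := hN.lift_fst _ _ _
  have hπ₁ : G.E π₁ := G.E.of_isPullback hN.flip hm
  exact S.reflection.isTrivial_of_isPullback_of_section hpm hs hv
    (preservesType1_comp hpm htype1 hproto _ _ _ _ _ hs hπ₁ hq hv) hτ

/-- A `Γ''`-trivial quotient of the first kernel-pair projection of `f` descends along `f`, by
monadicity, to a quotient of `f` itself. -/
theorem exists_normalComp_factorization (hpm : SplitShortFive 𝒞) (hM : AxM G.E) (hE4 : AxE4 G.E)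
    (hE5 : AxE5 G.E) (htype1 : PreservesType1 G.E G.I) (hproto : ProtoadditiveOn G.inX S.Fr)
    {K A B : 𝒞} {f : A ⟶ B} {k : K ⟶ A} (hf : G.Normal f) (hk : IsKernelOf k f) :
    ∃ (M : 𝒞) (m : M ⟶ B) (q : A ⟶ M), q ≫ m = f ∧ S.NormalComp m ∧
      ∀ {W : 𝒞} (g : W ⟶ K), g ≫ k ≫ q = 0 → g ≫ S.θ.app K = 0 := by
  obtain ⟨hfE, hft⟩ := hf
  have hR := IsPullback.of_hasPullback f f
  obtain ⟨k', hk'₂, hk'⟩ := hk.exists_lift_of_isPullback hR.flip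
  obtain ⟨T, τ, r, hr, hrτ, hτ, hθ⟩ := exists_trivialComp_factorization hM hE4 hE5 hproto
    (hR.lift_fst (𝟙 A) (𝟙 A) rfl) (G.E.of_isPullback hR.flip hfE) (hft _ _ hR) hk'
  obtain ⟨M, m, π, q, hm, hq, hqm, hπ, hrπ⟩ :=
    exists_factorization_of_quotient_kernelPair hpm hM hE4 hR hfE hr hrτ
  have hnormal : S.NormalComp m :=
    normalComp_of_isPullback hpm htype1 hproto hm hq (by rwa [hqm]) hτ
  refine ⟨M, m, q, hqm, hnormal, fun g hg => hθ g (hπ.hom_ext ?_ ?_)⟩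
  · rw [Category.assoc, Category.assoc, hrπ, ← Category.assoc k', hk'₂, hg, zero_comp]
  · rw [Category.assoc, Category.assoc, hrτ, hk'.w, comp_zero, zero_comp]

end SecondStructure

section Extensions

variable {𝒞 : Type u} [Category.{v} 𝒞] [HasZeroMorphisms 𝒞] {E : MorphismProperty 𝒞}

lemma isKernelOf_top [E.ContainsIdentities] {K P Q : ExtObj E} {κ : K ⟶ P} {φ : P ⟶ Q}
    (h : IsKernelOf κ φ) : IsKernelOf κ.top φ.top := by
  let idExt (X : 𝒞) : ExtObj E := ⟨X, X, 𝟙 X, E.id_mem X⟩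
  have : Mono κ.top := by
    refine ⟨fun {X} x y hxy => ?_⟩
    let x' : idExt X ⟶ K := ⟨x, x ≫ K.hom, (Category.id_comp _).symm⟩
    let y' : idExt X ⟶ K := ⟨y, y ≫ K.hom, (Category.id_comp _).symm⟩
    have hxy' : x' ≫ κ = y' ≫ κ := by
      refine ExtHom.ext hxy ?_
      calc (x ≫ K.hom) ≫ κ.bot = (x ≫ κ.top) ≫ P.hom := by simp only [Category.assoc, κ.w]
        _ = (y ≫ K.hom) ≫ κ.bot := by simp only [hxy, Category.assoc, κ.w]
    have := h.mono
    exact congrArg ExtHom.top ((cancel_mono κ).1 hxy')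
  refine .of_exists_lift (congrArg ExtHom.top h.w) fun {X} x hx => ?_
  let x' : idExt X ⟶ P := ⟨x, x ≫ P.hom, (Category.id_comp _).symm⟩
  obtain ⟨y, hy⟩ := h.exists_lift x' <| ExtHom.ext hx <| show (x ≫ P.hom) ≫ φ.bot = 0 by
    rw [Category.assoc, ← φ.w, ← Category.assoc, hx, zero_comp]
  exact ⟨y.top, congrArg ExtHom.top hy⟩

variable [E.IsMultiplicative]

/-- Since `κ.top ≫ P.hom = 0`, the square `(κ.top, 0)` is a morphism to `P` from the extension of a
zero object by `K.dom`; as it factors through `κ`, so `K.hom = 0`. -/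
lemma isZero_cod_of_isKernelOf [HasZeroObject 𝒞] [HasFiniteLimits 𝒞] [E.IsStableUnderBaseChange]
    (hM : AxM E) (hE4 : AxE4 E) {K P Q : ExtObj E} {κ : K ⟶ P} {φ : P ⟶ Q} [Mono φ.bot]
    (h : IsKernelOf κ φ) : IsZero K.cod := by
  obtain ⟨O, hO⟩ := HasZeroObject.zero (C := 𝒞)
  let Z : ExtObj E := ⟨K.dom, O, 0, hE4.of_section (hO.eq_of_src (0 ≫ 0) _)⟩
  have hκbot : κ.bot = 0 := zero_of_comp_mono φ.bot (congrArg ExtHom.bot h.w)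
  have hκtop : κ.top ≫ P.hom = 0 := by rw [κ.w, hκbot, comp_zero]
  let ψ : Z ⟶ P := ⟨κ.top, 0, by rw [hκtop, comp_zero]⟩
  obtain ⟨y, hy⟩ := h.exists_lift ψ (ExtHom.ext (congrArg ExtHom.top h.w :) zero_comp)
  have := (isKernelOf_top h).mono
  have hytop : y.top = 𝟙 K.dom := by
    rw [← cancel_mono κ.top, Category.id_comp]
    exact congrArg ExtHom.top hy
  have hKhom : K.hom = 0 := by
    calc K.hom = y.top ≫ K.hom := by rw [hytop, Category.id_comp]
      _ = 0 := y.w.trans zero_comp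
  have := hM.epi hE4 K.mem
  rw [IsZero.iff_id_eq_zero, ← cancel_epi K.hom, hKhom, zero_comp, zero_comp]

/-- A map to `Ker φ.bot`, completed by `0` in `Q`, lifts locally along the comparison of the double
extension to a map to `P.dom` killed by `φ.top`. -/
lemma isIso_bot_of_isDoubleExt [HasFiniteLimits 𝒞] [E.IsStableUnderBaseChange]
    (hpm : SplitShortFive 𝒞) (hM : AxM E) (hE4 : AxE4 E) {P Q : ExtObj E} {φ : P ⟶ Q}
    (hφ : IsDoubleExt φ) {K : 𝒞} {k : K ⟶ P.dom} (hk : IsKernelOf k φ.top) (hkP : k ≫ P.hom = 0) :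
    IsIso φ.bot := by
  obtain ⟨-, hbot, hdouble⟩ := hφ
  let l := pullback.lift P.hom φ.top φ.w.symm
  have hl : E l := hdouble _ _ (.of_hasPullback φ.bot Q.hom) l (pullback.lift_fst _ _ _)
    (pullback.lift_snd _ _ _)
  let b : kernel φ.bot ⟶ pullback φ.bot Q.hom :=
    pullback.lift (kernel.ι φ.bot) 0 (by rw [kernel.condition, zero_comp])
  have hw : pullback.fst b l ≫ b = pullback.snd b l ≫ l := pullback.condition
  have htop : pullback.snd b l ≫ φ.top = 0 :=
    calc _ = pullback.snd b l ≫ l ≫ pullback.snd _ _ := by rw [pullback.lift_snd]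
      _ = pullback.fst b l ≫ b ≫ pullback.snd _ _ := by
        rw [← Category.assoc, ← hw, Category.assoc]
      _ = 0 := by rw [pullback.lift_snd, comp_zero]
  have hι : pullback.fst b l ≫ kernel.ι φ.bot = pullback.snd b l ≫ P.hom :=
    calc _ = pullback.fst b l ≫ b ≫ pullback.fst _ _ := by rw [pullback.lift_fst]
      _ = pullback.snd b l ≫ l ≫ pullback.fst _ _ := by
        rw [← Category.assoc, hw, Category.assoc]
      _ = pullback.snd b l ≫ P.hom := by rw [pullback.lift_fst]
  obtain ⟨y, hy⟩ := hk.exists_lift _ htop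
  have : Epi (pullback.fst b l) := hM.epi hE4 (E.pullback_fst _ _ hl)
  have hι₀ : kernel.ι φ.bot = 0 := by
    rw [← comp_eq_zero_iff_of_epi (pullback.fst b l), hι, ← hy, Category.assoc, hkP, comp_zero]
  have := hpm.mono_of_kernel_ι_eq_zero φ.bot hι₀
  exact hM.isIso_of_mono φ.bot hbot

end Extensions

section Closure

variable {𝒞 : Type u} [Category.{v} 𝒞] [HasZeroMorphisms 𝒞] [HasFiniteLimits 𝒞]
  {G : GaloisStructure 𝒞} {S : SecondStructure G}

lemma isKernelOf_clYι [HasCokernels 𝒞] (hpm : SplitShortFive 𝒞) (hM : AxM G.E) (hE4 : AxE4 G.E)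
    {K A B : 𝒞} {k : K ⟶ A} {g : A ⟶ B} (hk : IsKernelOf k g) (hg : G.E g) :
    IsKernelOf (clYι S k) (g ≫ S.unit B) := by
  obtain ⟨hB⟩ := hk.nonempty_isColimit_cokernelCofork hpm hM hE4 hg
  let e : cokernel k ≅ B := (cokernelIsCokernel k).coconePointUniqueUpToIso hB
  have he : cokernel.π k ≫ e.hom = g := (cokernelIsCokernel k).comp_coconePointUniqueUpToIso_hom hB
    WalkingParallelPair.one
  have hunit : (cokernel.π k ≫ S.unit (cokernel k)) ≫ (G.I ⋙ S.Fr).map e.hom = g ≫ S.unit B :=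
    calc _ = cokernel.π k ≫ e.hom ≫ S.unit B :=
          (Category.assoc _ _ _).trans (congrArg _ (S.reflection.unit_naturality e.hom))
      _ = g ≫ S.unit B := by rw [← Category.assoc, he]
  exact hunit ▸ (isKernelOf_kernel_ι _).comp_mono _

lemma comp_normalization_top_eq_zero_iff (hpm : SplitShortFive 𝒞) (hM : AxM G.E)
    (hE4 : AxE4 G.E) (hE5 : AxE5 G.E) (htype1 : PreservesType1 G.E G.I)
    (hproto : ProtoadditiveOn G.inX S.Fr) (ND : Normalization G.E fun _ _ f => S.NormalComp f)
    {Q : ExtObj G.E} (hQ : G.Normal Q.hom) {K : 𝒞} {k : K ⟶ Q.dom} (hk : IsKernelOf k Q.hom)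
    {W : 𝒞} (x : W ⟶ K) : x ≫ k ≫ (ND.η₁.app Q).top = 0 ↔ x ≫ S.unit K = 0 := by
  set u : Q ⟶ ND.I₁.obj Q := ND.η₁.app Q
  constructor
  · intro hx
    obtain ⟨M, m, q, hqm, hm, hθ⟩ :=
      S.exists_normalComp_factorization hpm hM hE4 hE5 htype1 hproto hQ hk
    let φ : Q ⟶ ⟨M, Q.cod, m, hm.1⟩ := ⟨q, 𝟙 _, hqm.trans (Category.comp_id _).symm⟩
    obtain ⟨ψ, hψ, -⟩ := ND.refl_univ Q _ hm φ
    have hq : u.top ≫ ψ.top = q := congrArg ExtHom.top hψ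
    have hxθ : x ≫ S.θ.app K = 0 := hθ x <| by
      rw [← hq, ← Category.assoc k, ← Category.assoc x, hx, zero_comp]
    have hunit : S.unit K = S.θ.app K ≫ S.Fr.map (G.η.app K) := S.θ.naturality (G.η.app K)
    rw [hunit, ← Category.assoc, hxθ, zero_comp]
  · intro hx
    have hN : S.inY (kernel (ND.I₁.obj Q).hom) :=
      S.reflection.mem_of_isTrivial_fst (.of_hasPullback _ _)
        ((ND.mem Q).2 _ _ (.of_hasPullback _ _)) (isKernelOf_kernel_ι _)
    have hku : (k ≫ u.top) ≫ (ND.I₁.obj Q).hom = 0 := by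
      rw [Category.assoc, u.w, ← Category.assoc, hk.w, zero_comp]
    obtain ⟨c, hc⟩ : ∃ c : S.Fr.obj (G.I.obj K) ⟶ kernel (ND.I₁.obj Q).hom,
        S.unit K ≫ c = kernel.lift _ _ hku := (S.reflection.existsUnique_lift hN _).exists
    calc x ≫ k ≫ u.top = x ≫ (S.unit K ≫ c) ≫ kernel.ι _ := by rw [hc, kernel.lift_ι]
      _ = (x ≫ S.unit K) ≫ c ≫ kernel.ι _ := by simp only [Category.assoc]
      _ = 0 := by rw [hx, zero_comp]

lemma isKernelOf_clYι_comp_kernel_ι [HasCokernels 𝒞] (hpm : SplitShortFive 𝒞) (hM : AxM G.E)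
    (hE4 : AxE4 G.E) (hE5 : AxE5 G.E) (htype1 : PreservesType1 G.E G.I)
    (hproto : ProtoadditiveOn G.inX S.Fr) (ND : Normalization G.E fun _ _ f => S.NormalComp f)
    {P Q : ExtObj G.E} (hQ : G.Normal Q.hom) (f : P ⟶ Q) [Mono f.bot]
    (hf : G.E (kernel.map P.hom Q.hom f.top f.bot f.w.symm)) {A : 𝒞} {ℓ : A ⟶ kernel P.hom}
    (hℓ : IsKernelOf ℓ (kernel.map P.hom Q.hom f.top f.bot f.w.symm)) :
    IsKernelOf (clYι S ℓ ≫ kernel.ι P.hom) (f ≫ ND.η₁.app Q).top := by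
  refine IsKernelOf.comp_kernel_ι ((isKernelOf_clYι hpm hM hE4 hℓ hf).congr fun x => ?_)
    fun x hx => ?_
  · rw [← Category.assoc, ← comp_normalization_top_eq_zero_iff hpm hM hE4 hE5 htype1 hproto ND hQ
      (isKernelOf_kernel_ι _), Category.assoc, ← Category.assoc (kernel.map ..), kernel.lift_ι,
      Category.assoc, ExtHom.comp_top]
  · have := ND.bot_iso Q
    have hbot : x ≫ P.hom ≫ f.bot ≫ (ND.η₁.app Q).bot = 0 :=
      calc _ = x ≫ (f ≫ ND.η₁.app Q).top ≫ (ND.I₁.obj Q).hom :=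
            congrArg _ (f ≫ ND.η₁.app Q).w.symm
        _ = 0 := by rw [← Category.assoc, hx, zero_comp]
    rwa [← Category.assoc, comp_eq_zero_iff_of_mono] at hbot

end Closure

open ZeroObject in
/-- let `0 → ι(A) → P → Q → 0` be a short exact sequence in `Ext_ℰ(𝒞)`
with `f : P ⟶ Q` a double `ℰ`-extension and `Q` a `Γ`-normal extension, where `ι(A)` is
the extension `A ⟶ 0`.  Then (i) applying the kernel functor yields a short exact
sequence `0 → A → Ker P → Ker Q → 0` with `Ker f ∈ ℰ` and `Ker Q ∈ 𝒳`; and (ii) the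
closure of `ι(A)` in `P` with respect to `NExt_{Γ''}(𝒞)` equals `ι` of the closure of
`A` in `Ker P` with respect to `𝒴`.  (The closure of `ι(A)` in `P` is the kernel of
`f ≫ η¹''_Q`, since `f = coker(ι(A) → P)`.) -/
theorem kernel_sequence_and_closure
    {𝒞 : Type u} [Category.{v} 𝒞] [HasZeroMorphisms 𝒞] [HasZeroObject 𝒞]
    [HasFiniteLimits 𝒞] [HasCokernels 𝒞]
    (G : GaloisStructure 𝒞) (S : SecondStructure G)
    (hpm : ProtomodularCat 𝒞)
    (h4 : AxE4 G.E) (h5 : AxE5 G.E) (hM : AxM G.E)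
    (htype1 : PreservesType1 G.E G.I)
    (hproto : ProtoadditiveOn G.inX S.Fr)
    (ND'' : Normalization G.E (fun _ _ f => S.NormalComp f))
    (A : 𝒞) (hA : G.E (0 : A ⟶ (0 : 𝒞)))
    (P Q : ExtObj G.E) (f : P ⟶ Q)
    (hf : IsDoubleExt f) (hQ : G.Normal Q.hom)
    (κ : (⟨A, 0, 0, hA⟩ : ExtObj G.E) ⟶ P) (h0 : κ ≫ f = 0)
    (hker : Nonempty (IsLimit (KernelFork.ofι κ h0))) :
    -- the induced morphism `A ⟶ Ker P` exists, and:
    (∃ ℓ : A ⟶ kernel P.hom, ℓ ≫ kernel.ι P.hom = κ.top) ∧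
    (∀ ℓ : A ⟶ kernel P.hom, ℓ ≫ kernel.ι P.hom = κ.top →
      -- (i) `0 → A → Ker P → Ker Q → 0` is short exact, `Ker f ∈ ℰ`, `Ker Q ∈ 𝒳`
      (G.E (kernel.map P.hom Q.hom f.top f.bot f.w.symm) ∧
        G.inX (kernel Q.hom) ∧
        ∃ hℓ0 : ℓ ≫ kernel.map P.hom Q.hom f.top f.bot f.w.symm = 0,
          Nonempty (IsLimit (KernelFork.ofι ℓ hℓ0))) ∧
      -- (ii) the closure of `ι(A)` in `P` w.r.t. `NExt_{Γ''}(𝒞)`, i.e. the kernel of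
      -- `f ≫ η¹''_Q` in `Ext_ℰ(𝒞)`, is `ι` applied to the closure `cl^𝒴_{Ker P}(A)`
      (∀ (Kc : ExtObj G.E) (κc : Kc ⟶ P) (hc0 : κc ≫ (f ≫ ND''.η₁.app Q) = 0),
        IsLimit (KernelFork.ofι κc hc0) →
        IsZero Kc.cod ∧
        ∃ e : Kc.dom ≅ clY S ℓ,
          e.hom ≫ (clYι S ℓ ≫ kernel.ι P.hom) = κc.top)) := by
  have hκ := isKernelOf_top (κ := κ) ⟨h0, hker⟩
  have hκP : κ.top ≫ P.hom = 0 := κ.w.trans zero_comp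
  have := isIso_bot_of_isDoubleExt hpm.2 hM h4 hf hκ hκP
  refine ⟨⟨_, kernel.lift_ι _ _ hκP⟩, fun ℓ hℓ => ?_⟩
  have hpb := isPullback_kernel_map P.hom Q.hom f.top f.bot f.w.symm
  have hkerf : G.E (kernel.map P.hom Q.hom f.top f.bot f.w.symm) := G.E.of_isPullback hpb.flip hf.1
  obtain ⟨ℓ', hℓ', hkerℓ⟩ := hκ.exists_lift_of_isPullback hpb.flip
  obtain rfl : ℓ = ℓ' := by rw [← cancel_mono (kernel.ι P.hom), hℓ, hℓ']
  have hX : G.inX (kernel Q.hom) :=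
    G.reflection.mem_of_isTrivial_fst (.of_hasPullback _ _) (hQ.2 _ _ (.of_hasPullback _ _))
      (isKernelOf_kernel_ι _)
  refine ⟨⟨hkerf, hX, hkerℓ.w, hkerℓ.isLimit⟩, fun Kc κc hc0 hc => ?_⟩
  have hκc : IsKernelOf κc (f ≫ ND''.η₁.app Q) := ⟨hc0, ⟨hc⟩⟩
  have := ND''.bot_iso Q
  have : Mono (f ≫ ND''.η₁.app Q).bot := inferInstanceAs (Mono (f.bot ≫ (ND''.η₁.app Q).bot))
  exact ⟨isZero_cod_of_isKernelOf hM h4 hκc, (isKernelOf_top hκc).exists_iso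
    (isKernelOf_clYι_comp_kernel_ι hpm.2 hM h4 h5 htype1 hproto ND'' hQ f hkerf hkerℓ)⟩
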